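/- Let d ≥ 2 and let 𝒮 be a weighted step set satisfying the standing assumptions with negative drift (B(1) < A(1)), and suppose some step i ∈ 𝒮 with i_d = 0 has w_i > 0. Set ρ = √(A(1)/B(1)), S(1,ρ) = A(1)/ρ + Q(1) + ρB(1) = Q(1) + 2√(A(1)B(1)), b_k(1,ρ) = Σ_{i∈𝒮, i_k=1} w_i ρ^{i_d} for 1 ≤ k ≤ d−1, and C_ρ = [S(1,ρ)·ρ / (2 π^{d/2} A(1) (1 − 1/ρ)²)] · √( S(1,ρ)^d / (ρ · b_1(1,ρ)⋯b_{d−1}(1,ρ) · B(1)) ). Then there is a constant c > 0 such that for all n ≥ 1, | s_n · S(1,ρ)^{−n} · n^{d/2+1} − C_ρ | ≤ c/n; that is, s_n = S(1,ρ)^n · n^{−d/2−1} · C_ρ · (1 + O(1/n)). -/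

import Mathlib

open Finset

/-- The weighted number of walks of length `n` with steps in `S` (weights `w`),
beginning at the origin and confined to the non-negative orthant. -/
noncomputable def weightedWalkCount (d : ℕ) (S : Finset (Fin d → ℤ))
    (w : (Fin d → ℤ) → ℝ) (n : ℕ) : ℝ :=
  ∑ u : Fin n → S,
    if (∀ k : Fin n, ∀ m : Fin d, 0 ≤ ∑ j ∈ Finset.Iic k, (u j : Fin d → ℤ) m)
    then ∏ k : Fin n, w (u k) else 0

namespace NDrift

/-- coefficients of `(b y + q + a / y)^n` -/
noncomputable def NN (a b q : ℝ) : ℕ → ℤ → ℝ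
  | 0, k => if k = 0 then 1 else 0
  | n + 1, k => b * NN a b q n (k - 1) + q * NN a b q n k + a * NN a b q n (k + 1)

/-- weighted number of half-line walks starting at `z` -/
noncomputable def GG (a b q : ℝ) : ℕ → ℤ → ℝ
  | 0, z => if 0 ≤ z then 1 else 0
  | n + 1, z => if 0 ≤ z then
      b * GG a b q n (z + 1) + q * GG a b q n z + a * GG a b q n (z - 1) else 0

/-- weighted number of half-line walks from zero ending at `k` -/
noncomputable def PP (a b q : ℝ) : ℕ → ℤ → ℝ
  | 0, k => if k = 0 then 1 else 0
  | n + 1, k => if 0 ≤ k then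
      b * PP a b q n (k - 1) + q * PP a b q n k + a * PP a b q n (k + 1) else 0

lemma NN_deriv (a b q : ℝ) (n : ℕ) : ∀ k : ℤ, (k : ℝ) * NN a b q (n + 1) k
    = (n + 1) * (b * NN a b q n (k - 1) - a * NN a b q n (k + 1)) := by
  induction n with
  | zero =>
    intro k
    simp only [NN]
    rcases eq_or_ne k 0 with rfl | h0
    · simp
    rcases eq_or_ne k 1 with rfl | h1
    · simp
    rcases eq_or_ne k (-1) with rfl | h2
    · simp
    have e1 : k - 1 ≠ 0 := by omega
    have e2 : k + 1 ≠ 0 := by omega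
    simp [h0, e1, e2]
  | succ n ih =>
    intro k
    rw [NN]
    have h1 := ih (k - 1)
    have h2 := ih k
    have h3 := ih (k + 1)
    have e1 : NN a b q (n + 1) (k - 1) = b * NN a b q n (k - 1 - 1) + q * NN a b q n (k - 1)
      + a * NN a b q n (k - 1 + 1) := by rw [NN]
    have e3 : NN a b q (n + 1) (k + 1) = b * NN a b q n (k + 1 - 1) + q * NN a b q n (k + 1)
      + a * NN a b q n (k + 1 + 1) := by rw [NN]
    rw [show k - 1 + 1 = k by ring] at h1 e1
    rw [show k + 1 - 1 = k by ring] at h3 e3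
    push_cast at *
    linear_combination b * h1 + q * h2 + a * h3 - (n + 1) * b * e1 + (n + 1) * a * e3

lemma PP_neg (a b q : ℝ) (n : ℕ) (k : ℤ) (hk : k < 0) : PP a b q n k = 0 := by
  cases n with
  | zero => simp [PP]; omega
  | succ n => rw [PP, if_neg (by omega)]

lemma PP_big (a b q : ℝ) (n : ℕ) : ∀ (k : ℤ), (n : ℤ) < k → PP a b q n k = 0 := by
  induction n with
  | zero => intro k hk; simp [PP]; push_cast at hk; omega
  | succ n ih =>
    intro k hk
    push_cast at hk
    rw [PP, ih _ (by omega), ih _ (by omega), ih _ (by omega)]; simp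

lemma GG_neg (a b q : ℝ) (n : ℕ) (k : ℤ) (hk : k < 0) : GG a b q n k = 0 := by
  cases n with
  | zero => simp [GG]; omega
  | succ n => rw [GG, if_neg (by omega)]

lemma PP_NN (a b q : ℝ) (n : ℕ) : ∀ k : ℤ, -1 ≤ k →
    b * PP a b q n k = b * NN a b q n k - a * NN a b q n (k + 2) := by
  induction n with
  | zero =>
    intro k hk
    have : k + 2 ≠ 0 := by omega
    simp [PP, NN, this]
  | succ n ih =>
    intro k hk
    rcases eq_or_lt_of_le hk with h | h
    · subst h
      rw [PP_neg _ _ _ _ _ (by norm_num)]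
      have := NN_deriv a b q (n + 1) 0
      have h3 : (0 : ℝ) < ((n + 1 : ℕ) : ℝ) + 1 := by positivity
      simp only [Int.cast_zero, zero_mul] at this
      have := (mul_eq_zero.1 this.symm).resolve_left h3.ne'
      norm_num at this ⊢
      linarith
    · rw [PP, if_pos (by omega)]
      have h1 := ih (k - 1) (by omega)
      have h2 := ih k (by omega)
      have h3 := ih (k + 1) (by omega)
      have e1 : NN a b q (n + 1) k = b * NN a b q n (k - 1) + q * NN a b q n k
        + a * NN a b q n (k + 1) := by rw [NN]
      have e3 : NN a b q (n + 1) (k + 2) = b * NN a b q n (k - 1 + 2) + q * NN a b q n (k + 2)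
        + a * NN a b q n (k + 1 + 2) := by
        rw [NN]
        rw [show k - 1 + 2 = k + 2 - 1 by ring, show k + 1 + 2 = k + 2 + 1 by ring]
      rw [e1, e3]
      linear_combination b * h1 + q * h2 + a * h3

lemma duality_step (a b q : ℝ) (n m K : ℕ) (hK : n + 1 < K) :
    ∑ k ∈ range K, PP a b q (n + 1) k * GG a b q m k
      = ∑ k ∈ range K, PP a b q n k * GG a b q (m + 1) k := by
  rw [← sub_eq_zero, ← Finset.sum_sub_distrib]
  have hs : ∀ k ∈ range K, PP a b q (n + 1) k * GG a b q m k
      - PP a b q n k * GG a b q (m + 1) k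
      = -(b * (PP a b q n (((k + 1 : ℕ) : ℤ) - 1) * GG a b q m ((k + 1 : ℕ) : ℤ)
          - PP a b q n ((k : ℤ) - 1) * GG a b q m k))
        + a * (PP a b q n ((k + 1 : ℕ) : ℤ) * GG a b q m (((k + 1 : ℕ) : ℤ) - 1)
          - PP a b q n (k : ℤ) * GG a b q m ((k : ℤ) - 1)) := by
    intro k _
    rw [PP, GG, if_pos (by omega), if_pos (by omega)]
    push_cast
    rw [show (k : ℤ) + 1 - 1 = k by ring]
    ring
  rw [Finset.sum_congr rfl hs, Finset.sum_add_distrib, Finset.sum_neg_distrib, ← Finset.mul_sum,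
    ← Finset.mul_sum]
  rw [Finset.sum_range_sub (fun k : ℕ => PP a b q n ((k : ℤ) - 1) * GG a b q m (k : ℤ)) K,
    Finset.sum_range_sub (fun k : ℕ => PP a b q n (k : ℤ) * GG a b q m ((k : ℤ) - 1)) K]
  rw [PP_big _ _ _ n ((K : ℤ) - 1) (by omega), PP_big _ _ _ n (K : ℤ) (by omega)]
  rw [PP_neg _ _ _ n _ (by norm_num), GG_neg _ _ _ m (((0 : ℕ) : ℤ) - 1) (by norm_num)]
  simp

lemma duality (a b q : ℝ) (K : ℕ) (n : ℕ) (hK : n + 1 < K) : ∀ m,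
    ∑ k ∈ range K, PP a b q n k * GG a b q m k = GG a b q (n + m) 0 := by
  induction n with
  | zero =>
    intro m
    rw [Finset.sum_eq_single 0]
    · simp [PP]
    · intro k _ hk
      simp [PP, hk]
    · intro h; simp at h; omega
  | succ n ih =>
    intro m
    rw [duality_step _ _ _ _ _ _ (by omega), ih (by omega), show n + (m + 1) = n + 1 + m by ring]

lemma GG_formula (a b q : ℝ) (n : ℕ) : b * GG a b q n 0 * (n + 1) =
    ∑ k ∈ range (n + 2), ((k : ℝ) + 1) * NN a b q (n + 1) ((k : ℤ) + 1) := by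
  have := duality a b q (n + 2) n (by omega) 0
  rw [add_zero] at this
  rw [← this, Finset.mul_sum, Finset.sum_mul]
  refine Finset.sum_congr rfl fun k _ => ?_
  have h1 := PP_NN a b q n k (by omega)
  have h2 := NN_deriv a b q n ((k : ℤ) + 1)
  rw [show (k : ℤ) + 1 - 1 = k by ring, show (k : ℤ) + 1 + 1 = k + 2 by ring] at h2
  push_cast at h2
  rw [h2, ← h1]
  simp [GG]
  ring

lemma GG_bound (a b q ρ : ℝ) (hρ : 1 ≤ ρ) (n : ℕ) : ∀ z : ℤ,
    |GG a b q n z| ≤ ρ ^ z * (|q| + ρ * |b| + |a| / ρ) ^ n := by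
  have hρ0 : 0 < ρ := by linarith
  induction n with
  | zero =>
    intro z
    simp only [GG]
    split_ifs with h
    · simpa using one_le_zpow₀ hρ h
    · simp; positivity
  | succ n ih =>
    intro z
    rw [GG]
    split_ifs with h
    · have h1 := ih (z + 1)
      have h2 := ih z
      have h3 := ih (z - 1)
      rw [zpow_add_one₀ hρ0.ne'] at h1
      rw [zpow_sub_one₀ hρ0.ne'] at h3
      calc _ ≤ |b| * |GG a b q n (z + 1)| + |q| * |GG a b q n z| + |a| * |GG a b q n (z - 1)| := by
            rw [← abs_mul, ← abs_mul, ← abs_mul]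
            exact abs_add_three _ _ _
        _ ≤ |b| * (ρ ^ z * ρ * (|q| + ρ * |b| + |a| / ρ) ^ n)
            + |q| * (ρ ^ z * (|q| + ρ * |b| + |a| / ρ) ^ n)
            + |a| * (ρ ^ z * ρ⁻¹ * (|q| + ρ * |b| + |a| / ρ) ^ n) := by gcongr
        _ = _ := by rw [pow_succ]; field_simp; ring
    · simp; positivity

lemma integral_exp_int (m : ℤ) : ∫ φ in (-Real.pi)..Real.pi, Complex.exp (-(m * φ * Complex.I))
    = if m = 0 then 2 * Real.pi else 0 := by
  split_ifs with h
  · subst h; simp; ring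
  · have hc : (-(m * Complex.I) : ℂ) ≠ 0 := by simp [h]
    have := integral_exp_mul_complex (a := -Real.pi) (b := Real.pi) hc
    have e : ∀ φ : ℝ, Complex.exp (-(m * φ * Complex.I)) = Complex.exp (-(m * Complex.I) * φ) := by
      intro φ; congr 1; ring
    simp_rw [e]
    rw [this]
    have : Complex.exp (-(m * Complex.I) * (Real.pi : ℝ))
        = Complex.exp (-(m * Complex.I) * ((-Real.pi : ℝ) : ℂ)) := by
      rw [Complex.exp_eq_exp_iff_exists_int]
      refine ⟨-m, ?_⟩
      push_cast
      ring
    rw [this]; simp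

lemma NN_fourier (a b q ρ : ℝ) (hρ : 0 < ρ) (n : ℕ) : ∀ m : ℤ,
    ∫ φ in (-Real.pi)..Real.pi, Complex.exp (-(m * φ * Complex.I))
      * (q + ρ * b * Complex.exp (φ * Complex.I) + a / ρ * Complex.exp (-(φ * Complex.I))) ^ n
    = ((2 * Real.pi * ρ ^ m * NN a b q n m : ℝ) : ℂ) := by
  induction n with
  | zero =>
    intro m
    simp only [pow_zero, mul_one]
    rw [integral_exp_int]
    simp only [NN]
    split_ifs with h
    · subst h; simp
    · simp
  | succ n ih =>
    intro m
    have e : ∀ φ : ℝ, Complex.exp (-(m * φ * Complex.I))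
      * (q + ρ * b * Complex.exp (φ * Complex.I) + a / ρ * Complex.exp (-(φ * Complex.I))) ^ (n + 1)
      = ρ * b * (Complex.exp (-((m - 1 : ℤ) * φ * Complex.I))
      * (q + ρ * b * Complex.exp (φ * Complex.I) + a / ρ * Complex.exp (-(φ * Complex.I))) ^ n)
      + q * (Complex.exp (-(m * φ * Complex.I))
      * (q + ρ * b * Complex.exp (φ * Complex.I) + a / ρ * Complex.exp (-(φ * Complex.I))) ^ n)
      + a / ρ * (Complex.exp (-((m + 1 : ℤ) * φ * Complex.I))
      * (q + ρ * b * Complex.exp (φ * Complex.I) + a / ρ * Complex.exp (-(φ * Complex.I))) ^ n) := by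
      intro φ
      have e1 : Complex.exp (-((m - 1 : ℤ) * φ * Complex.I))
        = Complex.exp (-(m * φ * Complex.I)) * Complex.exp (φ * Complex.I) := by
        rw [← Complex.exp_add]; congr 1; push_cast; ring
      have e2 : Complex.exp (-((m + 1 : ℤ) * φ * Complex.I))
        = Complex.exp (-(m * φ * Complex.I)) * Complex.exp (-(φ * Complex.I)) := by
        rw [← Complex.exp_add]; congr 1; push_cast; ring
      rw [e1, e2, pow_succ]
      ring
    simp_rw [e]
    have hi : ∀ (c : ℂ) (k : ℤ), IntervalIntegrable (fun φ : ℝ => c * (Complex.exp (-(k * φ * Complex.I))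
      * (q + ρ * b * Complex.exp (φ * Complex.I) + a / ρ * Complex.exp (-(φ * Complex.I))) ^ n))
      MeasureTheory.volume (-Real.pi) Real.pi := by
      intro c k
      apply Continuous.intervalIntegrable
      fun_prop
    rw [intervalIntegral.integral_add ((hi _ _).add (hi _ _)) (hi _ _),
      intervalIntegral.integral_add (hi _ _) (hi _ _)]
    simp_rw [intervalIntegral.integral_const_mul]
    rw [ih, ih, ih, NN, zpow_sub_one₀ hρ.ne', zpow_add_one₀ hρ.ne']
    have : (ρ : ℂ) ≠ 0 := by exact_mod_cast hρ.ne'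
    push_cast
    field_simp

/-- truncated kernel -/
noncomputable def hN (ρ : ℝ) (N : ℕ) (φ : ℝ) : ℂ :=
  ∑ k ∈ range (N + 1), (((k : ℝ) + 1) * (ρ⁻¹) ^ (k + 1) : ℝ) * Complex.exp (-((k + 1 : ℕ) * φ * Complex.I))

lemma GG_fourier (a b q ρ : ℝ) (hρ : 0 < ρ) (n : ℕ) :
    2 * Real.pi * (b * GG a b q n 0 * (n + 1)) =
    ∫ φ in (-Real.pi)..Real.pi, (hN ρ (n + 1) φ
      * (q + ρ * b * Complex.exp (φ * Complex.I) + a / ρ * Complex.exp (-(φ * Complex.I))) ^ (n + 1)).re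
       := by
  have hc : ∀ k : ℕ, IntervalIntegrable (fun φ : ℝ => (((k : ℝ) + 1) * (ρ⁻¹) ^ (k + 1) : ℝ) * (Complex.exp (-(((k : ℤ) + 1 : ℤ) * φ * Complex.I))
      * (q + ρ * b * Complex.exp (φ * Complex.I) + a / ρ * Complex.exp (-(φ * Complex.I))) ^ (n + 1)))
      MeasureTheory.volume (-Real.pi) Real.pi := by
      intro k
      apply Continuous.intervalIntegrable
      fun_prop
  have key : ((2 * Real.pi * (b * GG a b q n 0 * (n + 1)) : ℝ) : ℂ) =
    ∫ φ in (-Real.pi)..Real.pi, (hN ρ (n + 1) φ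
      * (q + ρ * b * Complex.exp (φ * Complex.I) + a / ρ * Complex.exp (-(φ * Complex.I))) ^ (n + 1)) := by
    rw [GG_formula]
    have e : ∀ φ : ℝ, (hN ρ (n + 1) φ
      * (q + ρ * b * Complex.exp (φ * Complex.I) + a / ρ * Complex.exp (-(φ * Complex.I))) ^ (n + 1))
      = ∑ k ∈ range (n + 2), (((k : ℝ) + 1) * (ρ⁻¹) ^ (k + 1) : ℝ) * (Complex.exp (-(((k : ℤ) + 1 : ℤ) * φ * Complex.I))
      * (q + ρ * b * Complex.exp (φ * Complex.I) + a / ρ * Complex.exp (-(φ * Complex.I))) ^ (n + 1)) := by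
      intro φ
      rw [hN, Finset.sum_mul]
      refine Finset.sum_congr rfl fun k _ => ?_
      push_cast
      ring
    simp_rw [e]
    rw [intervalIntegral.integral_finsetSum (fun k _ => hc k)]
    simp_rw [intervalIntegral.integral_const_mul, NN_fourier a b q ρ hρ]
    rw [Finset.mul_sum]
    push_cast
    refine Finset.sum_congr rfl fun k _ => ?_
    have : (ρ : ℂ) ≠ 0 := by exact_mod_cast hρ.ne'
    rw [show (ρ : ℂ) ^ ((k : ℤ) + 1) = (ρ : ℂ) ^ (k + 1) by exact_mod_cast zpow_natCast (ρ : ℂ) (k + 1)]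
    rw [inv_pow]
    field_simp
  have h2 := congrArg Complex.re key
  rw [Complex.ofReal_re] at h2
  rw [h2]
  have hIntg : IntervalIntegrable (fun φ : ℝ => (hN ρ (n + 1) φ
      * (q + ρ * b * Complex.exp (φ * Complex.I) + a / ρ * Complex.exp (-(φ * Complex.I))) ^ (n + 1)))
      MeasureTheory.volume (-Real.pi) Real.pi := by
    apply Continuous.intervalIntegrable
    unfold hN
    fun_prop
  have := Complex.reCLM.intervalIntegral_comp_comm hIntg
  simp only [Complex.reCLM_apply] at this
  rw [← this]

end NDrift

namespace NDrift

/-- walks started at `x` -/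
noncomputable def CC {d : ℕ} (S : Finset (Fin d → ℤ)) (w : (Fin d → ℤ) → ℝ) :
    ℕ → (Fin d → ℤ) → ℝ
  | 0, _ => 1
  | n + 1, x => ∑ i ∈ S, w i * if (∀ m, 0 ≤ (x + i) m) then CC S w n (x + i) else 0

lemma sum_Iic_succ {d : ℕ} {n : ℕ} (v : Fin (n + 1) → (Fin d → ℤ)) (k : Fin n) (m : Fin d) :
    ∑ j ∈ Finset.Iic k.succ, v j m = v 0 m + ∑ j ∈ Finset.Iic k, v j.succ m := by
  have h1 : Finset.Iic k.succ = univ.filter (fun j => j ≤ k.succ) := by ext; simp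
  have h2 : Finset.Iic k = univ.filter (fun j => j ≤ k) := by ext; simp
  rw [h1, h2, sum_filter, sum_filter, Fin.sum_univ_succ]
  simp

lemma sum_Iic_zero {d : ℕ} {n : ℕ} (v : Fin (n + 1) → (Fin d → ℤ)) (m : Fin d) :
    ∑ j ∈ Finset.Iic (0 : Fin (n + 1)), v j m = v 0 m := by
  have h1 : Finset.Iic (0 : Fin (n + 1)) = {0} := by ext; simp
  rw [h1]; simp

open Classical in
lemma CC_eq {d : ℕ} (S : Finset (Fin d → ℤ)) (w : (Fin d → ℤ) → ℝ) (n : ℕ) :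
    ∀ x : Fin d → ℤ, (∑ u : Fin n → S,
    if (∀ k : Fin n, ∀ m : Fin d, 0 ≤ x m + ∑ j ∈ Finset.Iic k, (u j : Fin d → ℤ) m)
    then ∏ k : Fin n, w (u k) else 0) = CC S w n x := by
  induction n with
  | zero => intro x; simp [CC]
  | succ n ih =>
    intro x
    rw [← Equiv.sum_comp (Fin.consEquiv (fun _ => (S : Type))), Fintype.sum_prod_type, CC,
      ← Finset.sum_coe_sort S]
    refine Finset.sum_congr rfl fun i _ => ?_
    have : ∀ u : Fin n → S, (if (∀ k : Fin (n + 1), ∀ m : Fin d, 0 ≤ x m + ∑ j ∈ Finset.Iic k,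
        (((Fin.consEquiv (fun _ => (S : Type))) (i, u) j : S) : Fin d → ℤ) m)
        then ∏ k : Fin (n + 1), w ((Fin.consEquiv (fun _ => (S : Type))) (i, u) k : S) else 0)
        = w i * if (∀ m, 0 ≤ (x + i.1) m) then
          (if (∀ k : Fin n, ∀ m : Fin d, 0 ≤ (x + i.1) m + ∑ j ∈ Finset.Iic k, (u j : Fin d → ℤ) m)
            then ∏ k : Fin n, w (u k) else 0) else 0 := by
      intro u
      rw [Fin.prod_univ_succ]
      have hc : (∀ k : Fin (n + 1), ∀ m : Fin d, 0 ≤ x m + ∑ j ∈ Finset.Iic k,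
        (((Fin.consEquiv (fun _ => (S : Type))) (i, u) j : S) : Fin d → ℤ) m) ↔
        (∀ m, 0 ≤ (x + i.1) m) ∧
          (∀ k : Fin n, ∀ m : Fin d, 0 ≤ (x + i.1) m + ∑ j ∈ Finset.Iic k, (u j : Fin d → ℤ) m) := by
        rw [Fin.forall_fin_succ]
        have e0 := fun m => sum_Iic_zero (fun j => (((Fin.consEquiv (fun _ => (S : Type))) (i, u) j : S) : Fin d → ℤ)) m
        have e1 := fun k m => sum_Iic_succ (fun j => (((Fin.consEquiv (fun _ => (S : Type))) (i, u) j : S) : Fin d → ℤ)) k m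
        simp only [e0, e1]
        simp [Fin.consEquiv, add_assoc]
      simp only [hc]
      by_cases h1 : (∀ m, 0 ≤ (x + i.1) m)
      · by_cases h2 : (∀ k : Fin n, ∀ m : Fin d, 0 ≤ (x + i.1) m + ∑ j ∈ Finset.Iic k, (u j : Fin d → ℤ) m)
        · rw [if_pos ⟨h1, h2⟩, if_pos h1, if_pos h2]
          simp [Fin.consEquiv]
        · rw [if_neg (fun h => h2 h.2), if_pos h1, if_neg h2]
          simp
      · rw [if_neg (fun h => h1 h.1), if_neg h1]
        simp
    rw [Finset.sum_congr rfl (fun u _ => this u), ← Finset.mul_sum]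
    congr 1
    split_ifs with h
    · exact ih _
    · simp

lemma walk_eq_CC {d : ℕ} (S : Finset (Fin d → ℤ)) (w : (Fin d → ℤ) → ℝ) (n : ℕ) :
    weightedWalkCount d S w n = CC S w n 0 := by
  rw [← CC_eq, weightedWalkCount]
  simp

/-- symmetrization of one family of coordinates -/
lemma symmetrize {e : ℕ} (S : Finset (Fin (e + 1) → ℤ)) (w : (Fin (e + 1) → ℤ) → ℝ)
    (hsym : ∀ j : Fin e, ∀ i ∈ S,
      Function.update i j.castSucc (-(i j.castSucc)) ∈ S ∧
        w (Function.update i j.castSucc (-(i j.castSucc))) = w i)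
    (F : ℤ → ℝ) (φ : Fin e → ℤ → ℝ) (T : Finset (Fin e)) :
    ∑ i ∈ S, w i * F (i (Fin.last e)) * ∏ k, φ k (i k.castSucc)
      = ∑ i ∈ S, w i * F (i (Fin.last e)) * ∏ k,
        if k ∈ T then (φ k (i k.castSucc) + φ k (-(i k.castSucc))) / 2 else φ k (i k.castSucc) := by
  induction T using Finset.induction_on with
  | empty => simp
  | insert j T hj ih =>
    rw [ih]
    set ψ : Fin e → ℤ → ℝ := fun k z => if k ∈ T then (φ k z + φ k (-z)) / 2 else φ k z with hψ
    have key : ∑ i ∈ S, w i * F (i (Fin.last e)) * ∏ k, ψ k (i k.castSucc)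
        = ∑ i ∈ S, w i * F (i (Fin.last e)) * ∏ k, ψ k ((Function.update i j.castSucc (-(i j.castSucc))) k.castSucc) := by
      refine Finset.sum_nbij' (fun i => Function.update i j.castSucc (-(i j.castSucc)))
        (fun i => Function.update i j.castSucc (-(i j.castSucc))) (fun i hi => (hsym j i hi).1)
        (fun i hi => (hsym j i hi).1) ?_ ?_ ?_
      · intro i _; simp
      · intro i _; simp
      · intro i hi
        rw [(hsym j i hi).2]
        have : Fin.last e ≠ j.castSucc := (Fin.castSucc_lt_last j).ne'
        rw [Function.update_of_ne this]
        simp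
    have e1 : ∀ i : Fin (e + 1) → ℤ, ∏ k, ψ k ((Function.update i j.castSucc (-(i j.castSucc))) k.castSucc)
        = φ j (-(i j.castSucc)) * ∏ k ∈ univ.erase j, ψ k (i k.castSucc) := by
      intro i
      rw [← Finset.mul_prod_erase univ _ (Finset.mem_univ j)]
      congr 1
      · simp [hψ, hj]
      · refine Finset.prod_congr rfl fun k hk => ?_
        rw [Function.update_of_ne]
        intro h
        exact (Finset.ne_of_mem_erase hk) (Fin.castSucc_injective _ h)
    have e2 : ∀ i : Fin (e + 1) → ℤ, ∏ k, ψ k (i k.castSucc)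
        = φ j (i j.castSucc) * ∏ k ∈ univ.erase j, ψ k (i k.castSucc) := by
      intro i
      rw [← Finset.mul_prod_erase univ _ (Finset.mem_univ j)]
      congr 1
      simp [hψ, hj]
    have e3 : ∀ i : Fin (e + 1) → ℤ, (∏ k,
        if k ∈ insert j T then (φ k (i k.castSucc) + φ k (-(i k.castSucc))) / 2 else φ k (i k.castSucc))
        = (φ j (i j.castSucc) + φ j (-(i j.castSucc))) / 2 * ∏ k ∈ univ.erase j, ψ k (i k.castSucc) := by
      intro i
      rw [← Finset.mul_prod_erase univ _ (Finset.mem_univ j)]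
      congr 1
      · simp
      · refine Finset.prod_congr rfl fun k hk => ?_
        have := Finset.ne_of_mem_erase hk
        simp [hψ, this]
    have key2 : ∑ i ∈ S, w i * F (i (Fin.last e)) * ∏ k, ψ k (i k.castSucc)
      = ((∑ i ∈ S, w i * F (i (Fin.last e)) * ∏ k, ψ k (i k.castSucc)) +
       ∑ i ∈ S, w i * F (i (Fin.last e)) * ∏ k, ψ k ((Function.update i j.castSucc (-(i j.castSucc))) k.castSucc)) / 2 := by
      rw [← key]; ring
    change ∑ i ∈ S, w i * F (i (Fin.last e)) * ∏ k, ψ k (i k.castSucc) = _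
    rw [key2, ← Finset.sum_add_distrib, Finset.sum_div]
    refine Finset.sum_congr rfl fun i _ => ?_
    rw [e1, e2, e3]
    ring

/-- `∑_{i_d = ε} w_i ∏ cos (i_k θ_k)` -/
noncomputable def tr {e : ℕ} (S : Finset (Fin (e + 1) → ℤ)) (w : (Fin (e + 1) → ℤ) → ℝ) (ε : ℤ)
    (θ : Fin e → ℝ) : ℝ :=
  ∑ i ∈ S, w i * (if i (Fin.last e) = ε then 1 else 0) * ∏ k, Real.cos (i k.castSucc * θ k)

/-- Chebyshev value -/
noncomputable def Uc (x : ℤ) (t : ℝ) : ℝ := (Polynomial.Chebyshev.U ℝ x).eval (Real.cos t)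

lemma Uc_sym (x z : ℤ) (t : ℝ) (hz : z = -1 ∨ z = 0 ∨ z = 1) :
    (Uc (x + z) t + Uc (x + -z) t) / 2 = Real.cos (z * t) * Uc x t := by
  have h := congrArg (Polynomial.eval (Real.cos t)) (Polynomial.Chebyshev.U_add_one ℝ x)
  simp only [Polynomial.eval_sub, Polynomial.eval_mul, Polynomial.eval_X, Polynomial.eval_ofNat] at h
  unfold Uc
  rcases hz with rfl | rfl | rfl
  · simp only [neg_neg, h, ← sub_eq_add_neg]; push_cast; simp; ring
  · simp
  · simp only [h, ← sub_eq_add_neg]; push_cast; simp; ring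

lemma Uc_neg_one (t : ℝ) : Uc (-1) t = 0 := by simp [Uc]
lemma Uc_zero (t : ℝ) : Uc 0 t = 1 := by simp [Uc]

lemma Uc_cont (x : ℤ) : Continuous (Uc x) := by
  unfold Uc
  exact (Polynomial.continuous _).comp Real.continuous_cos

lemma Uc_step (x : ℤ) (t : ℝ) : Uc (x + 1) t * (1 + Real.cos t) - Uc x t * (1 + Real.cos t)
    = Real.cos ((x + 1 : ℤ) * t) + Real.cos ((x + 2 : ℤ) * t) := by
  have h1 := congrArg (Polynomial.eval (Real.cos t)) (Polynomial.Chebyshev.U_eq_X_mul_U_add_T ℝ x)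
  have h2 := congrArg (Polynomial.eval (Real.cos t)) (Polynomial.Chebyshev.T_eq_X_mul_T_sub_pol_U ℝ x)
  rw [Polynomial.Chebyshev.T_real_cos] at h2
  simp only [Polynomial.eval_sub, Polynomial.eval_mul, Polynomial.eval_X, Polynomial.eval_add, Polynomial.eval_one, Polynomial.eval_pow, Polynomial.Chebyshev.T_real_cos] at h1 h2
  unfold Uc
  rw [h1, h2]
  ring

lemma integral_cos_int (m : ℤ) (hm : m ≠ 0) : ∫ t in (-Real.pi)..Real.pi, Real.cos (m * t) = 0 := by
  have hm' : (m : ℝ) ≠ 0 := by exact_mod_cast hm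
  rw [intervalIntegral.integral_comp_mul_left (fun t => Real.cos t) hm']
  simp [Real.sin_int_mul_pi]

lemma integral_Uc (x : ℕ) : ∫ t in (-Real.pi)..Real.pi, Uc x t * (1 + Real.cos t) = 2 * Real.pi := by
  induction x with
  | zero =>
    simp only [Nat.cast_zero, Uc_zero, one_mul]
    rw [intervalIntegral.integral_add (by simp) (Real.continuous_cos.intervalIntegrable _ _)]
    simp; ring
  | succ x ih =>
    have hc : ∀ z : ℤ, IntervalIntegrable (fun t => Uc z t * (1 + Real.cos t)) MeasureTheory.volume (-Real.pi) Real.pi := by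
      intro z
      apply Continuous.intervalIntegrable
      exact (Uc_cont z).mul (by fun_prop)
    have := intervalIntegral.integral_sub (hc ((x : ℤ) + 1)) (hc x)
    simp_rw [Uc_step] at this
    rw [intervalIntegral.integral_add, integral_cos_int _ (by omega), integral_cos_int _ (by omega), ih] at this
    · push_cast
      linarith
    · apply Continuous.intervalIntegrable; fun_prop
    · apply Continuous.intervalIntegrable; fun_prop

/-- Lebesgue measure on the circle -/
noncomputable def mu1 : MeasureTheory.Measure ℝ :=
  MeasureTheory.volume.restrict (Set.Ioc (-Real.pi) Real.pi)

instance : MeasureTheory.IsFiniteMeasure mu1 := by unfold mu1; infer_instance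

/-- Lebesgue measure on the torus -/
noncomputable def mue (e : ℕ) : MeasureTheory.Measure (Fin e → ℝ) :=
  MeasureTheory.Measure.pi (fun _ => mu1)

instance (e : ℕ) : MeasureTheory.IsFiniteMeasure (mue e) := by unfold mue; infer_instance

lemma integral_mu1 {E : Type*} [NormedAddCommGroup E] [NormedSpace ℝ E] (f : ℝ → E) :
    ∫ t, f t ∂mu1 = ∫ t in (-Real.pi)..Real.pi, f t := by
  rw [intervalIntegral.integral_of_le (by linarith [Real.pi_pos])]; rfl

lemma mue_ae (e : ℕ) : ∀ᵐ θ ∂(mue e), ∀ k, θ k ∈ Set.Ioc (-Real.pi) Real.pi := by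
  rw [MeasureTheory.ae_all_iff]
  intro k
  have : ∀ᵐ t ∂mu1, t ∈ Set.Ioc (-Real.pi) Real.pi := MeasureTheory.ae_restrict_mem measurableSet_Ioc
  exact (MeasureTheory.Measure.quasiMeasurePreserving_eval (μ := fun _ : Fin e => mu1) k).ae this

lemma mu1_ae : ∀ᵐ t ∂mu1, t ∈ Set.Ioc (-Real.pi) Real.pi :=
  MeasureTheory.ae_restrict_mem measurableSet_Ioc

lemma integrable_mue {e : ℕ} (f : (Fin e → ℝ) → ℝ) (hf : Continuous f) :
    MeasureTheory.Integrable f (mue e) := by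
  have hK : IsCompact (Set.univ.pi (fun _ : Fin e => Set.Icc (-Real.pi) Real.pi)) :=
    isCompact_univ_pi (fun _ => isCompact_Icc)
  obtain ⟨C, hC⟩ := hK.exists_bound_of_continuousOn hf.continuousOn
  refine MeasureTheory.Integrable.of_bound (C := C) hf.aestronglyMeasurable ?_
  filter_upwards [mue_ae e] with θ hθ
  exact hC θ (fun k _ => ⟨(hθ k).1.le, (hθ k).2⟩)

lemma integrable_mu1 (f : ℝ → ℝ) (hf : Continuous f) :
    MeasureTheory.Integrable f mu1 := 
  (hf.continuousOn.integrableOn_Icc (a := -Real.pi) (b := Real.pi)).mono_set Set.Ioc_subset_Icc_self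

lemma tr_cont {e : ℕ} (S : Finset (Fin (e + 1) → ℤ)) (w : (Fin (e + 1) → ℤ) → ℝ) (ε : ℤ) :
    Continuous (tr S w ε) := by
  unfold tr; fun_prop

lemma GG_cont {X : Type*} [TopologicalSpace X] {a b q : X → ℝ} (ha : Continuous a) (hb : Continuous b)
    (hq : Continuous q) (n : ℕ) : ∀ z : ℤ, Continuous (fun θ => GG (a θ) (b θ) (q θ) n z) := by
  induction n with
  | zero => intro z; simp only [GG]; fun_prop
  | succ n ih =>
    intro z
    simp only [GG]
    split_ifs
    · exact ((hb.mul (ih _)).add (hq.mul (ih _))).add (ha.mul (ih _))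
    · fun_prop

lemma CC_formula {e : ℕ} (S : Finset (Fin (e + 1) → ℤ)) (w : (Fin (e + 1) → ℤ) → ℝ)
    (hS : ∀ i ∈ S, ∀ m, i m = -1 ∨ i m = 0 ∨ i m = 1)
    (hsym : ∀ j : Fin e, ∀ i ∈ S,
      Function.update i j.castSucc (-(i j.castSucc)) ∈ S ∧
        w (Function.update i j.castSucc (-(i j.castSucc))) = w i) (n : ℕ) :
    ∀ x : Fin (e + 1) → ℤ, (∀ m, 0 ≤ x m) → (2 * Real.pi) ^ e * CC S w n x =
      ∫ θ, (∏ k, Uc (x k.castSucc) (θ k) * (1 + Real.cos (θ k))) *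
        GG (tr S w (-1) θ) (tr S w 1 θ) (tr S w 0 θ) n (x (Fin.last e)) ∂(mue e) := by
  induction n with
  | zero =>
    intro x hx
    simp only [CC, GG, if_pos (hx _), mul_one]
    unfold mue
    rw [MeasureTheory.integral_fintype_prod_eq_prod (fun (k : Fin e) t => Uc (x k.castSucc) t * (1 + Real.cos t))]
    have : ∀ k : Fin e, ∫ t, Uc (x k.castSucc) t * (1 + Real.cos t) ∂mu1 = 2 * Real.pi := by
      intro k
      rw [integral_mu1]
      obtain ⟨m, hm⟩ := Int.eq_ofNat_of_zero_le (hx k.castSucc)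
      rw [hm]
      exact integral_Uc m
    simp [this]
  | succ n ih =>
    intro x hx
    rw [CC, Finset.mul_sum]
    have h1 : ∀ i ∈ S, (2 * Real.pi) ^ e * (w i * if (∀ m, 0 ≤ (x + i) m) then CC S w n (x + i) else 0)
        = ∫ θ, w i * ((∏ k, Uc ((x + i) k.castSucc) (θ k) * (1 + Real.cos (θ k))) *
        GG (tr S w (-1) θ) (tr S w 1 θ) (tr S w 0 θ) n ((x + i) (Fin.last e))) ∂(mue e) := by
      intro i hi
      rw [MeasureTheory.integral_const_mul]
      split_ifs with h
      · rw [← ih _ h]; ring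
      · push Not at h
        obtain ⟨m, hm⟩ := h
        have hm1 : (x + i) m = -1 := by
          have := hx m
          rcases hS i hi m with h | h | h <;> simp [h] at hm ⊢ <;> omega
        have : ∀ θ : Fin e → ℝ, ((∏ k, Uc ((x + i) k.castSucc) (θ k) * (1 + Real.cos (θ k))) *
        GG (tr S w (-1) θ) (tr S w 1 θ) (tr S w 0 θ) n ((x + i) (Fin.last e))) = 0 := by
          intro θ
          rcases Fin.eq_castSucc_or_eq_last m with ⟨k, rfl⟩ | rfl
          · rw [Finset.prod_eq_zero (Finset.mem_univ k), zero_mul]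
            rw [hm1, Uc_neg_one, zero_mul]
          · rw [GG_neg _ _ _ _ _ hm, mul_zero]
        simp only [this]
        simp
    rw [Finset.sum_congr rfl h1, ← MeasureTheory.integral_finsetSum]
    · congr 1
      ext θ
      rw [GG, if_pos (hx _)]
      have hs := symmetrize S w hsym (fun z => GG (tr S w (-1) θ) (tr S w 1 θ) (tr S w 0 θ) n (x (Fin.last e) + z))
        (fun k z => Uc (x k.castSucc + z) (θ k) * (1 + Real.cos (θ k))) univ
      simp only [Finset.mem_univ, if_true] at hs
      have hl : ∀ i ∈ S, w i * ((∏ k, Uc ((x + i) k.castSucc) (θ k) * (1 + Real.cos (θ k))) *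
        GG (tr S w (-1) θ) (tr S w 1 θ) (tr S w 0 θ) n ((x + i) (Fin.last e)))
        = w i * GG (tr S w (-1) θ) (tr S w 1 θ) (tr S w 0 θ) n (x (Fin.last e) + i (Fin.last e)) *
          (∏ k, Uc (x k.castSucc + i k.castSucc) (θ k) * (1 + Real.cos (θ k))) := by
        intro i _
        simp only [Pi.add_apply]
        ring
      rw [Finset.sum_congr rfl hl, hs]
      have hr : ∀ i ∈ S, w i * GG (tr S w (-1) θ) (tr S w 1 θ) (tr S w 0 θ) n (x (Fin.last e) + i (Fin.last e)) *
          (∏ k, (Uc (x k.castSucc + i k.castSucc) (θ k) * (1 + Real.cos (θ k)) + 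
            Uc (x k.castSucc + -i k.castSucc) (θ k) * (1 + Real.cos (θ k))) / 2)
          = (∏ k, Uc (x k.castSucc) (θ k) * (1 + Real.cos (θ k))) *
          ((w i * (if i (Fin.last e) = 1 then 1 else 0) * ∏ k, Real.cos (i k.castSucc * θ k)) *
            GG (tr S w (-1) θ) (tr S w 1 θ) (tr S w 0 θ) n (x (Fin.last e) + 1)
          + (w i * (if i (Fin.last e) = 0 then 1 else 0) * ∏ k, Real.cos (i k.castSucc * θ k)) *
            GG (tr S w (-1) θ) (tr S w 1 θ) (tr S w 0 θ) n (x (Fin.last e))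
          + (w i * (if i (Fin.last e) = -1 then 1 else 0) * ∏ k, Real.cos (i k.castSucc * θ k)) *
            GG (tr S w (-1) θ) (tr S w 1 θ) (tr S w 0 θ) n (x (Fin.last e) - 1)) := by
        intro i hi
        have hp : (∏ k, (Uc (x k.castSucc + i k.castSucc) (θ k) * (1 + Real.cos (θ k)) + 
            Uc (x k.castSucc + -i k.castSucc) (θ k) * (1 + Real.cos (θ k))) / 2)
            = (∏ k, Real.cos (i k.castSucc * θ k)) * ∏ k, Uc (x k.castSucc) (θ k) * (1 + Real.cos (θ k)) := by
          rw [← Finset.prod_mul_distrib]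
          refine Finset.prod_congr rfl fun k _ => ?_
          rw [← mul_assoc, ← Uc_sym _ _ _ (hS i hi k.castSucc)]
          ring
        rw [hp]
        rcases hS i hi (Fin.last e) with h | h | h <;> rw [h]
        · rw [← sub_eq_add_neg]; norm_num; ring
        · norm_num; ring
        · norm_num; ring
      rw [Finset.sum_congr rfl hr, ← Finset.mul_sum]
      congr 1
      rw [Finset.sum_add_distrib, Finset.sum_add_distrib, ← Finset.sum_mul, ← Finset.sum_mul, ← Finset.sum_mul]
      rfl
    · intro i _
      apply integrable_mue
      refine continuous_const.mul (Continuous.mul ?_ (GG_cont (tr_cont _ _ _) (tr_cont _ _ _) (tr_cont _ _ _) _ _))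
      refine continuous_finsetProd _ fun k _ => ?_
      exact ((Uc_cont _).comp (continuous_apply k)).mul (by fun_prop)

lemma walk_formula {e : ℕ} (S : Finset (Fin (e + 1) → ℤ)) (w : (Fin (e + 1) → ℤ) → ℝ)
    (hS : ∀ i ∈ S, ∀ m, i m = -1 ∨ i m = 0 ∨ i m = 1)
    (hsym : ∀ j : Fin e, ∀ i ∈ S,
      Function.update i j.castSucc (-(i j.castSucc)) ∈ S ∧
        w (Function.update i j.castSucc (-(i j.castSucc))) = w i) (n : ℕ) :
    (2 * Real.pi) ^ e * weightedWalkCount (e + 1) S w n =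
      ∫ θ, (∏ k, (1 + Real.cos (θ k))) *
        GG (tr S w (-1) θ) (tr S w 1 θ) (tr S w 0 θ) n 0 ∂(mue e) := by
  rw [walk_eq_CC, CC_formula S w hS hsym n 0 (by simp)]
  simp [Uc_zero]

end NDrift

namespace NDrift

lemma pow_sub_bound (f E : ℂ) (r : ℝ) (hf : ‖f‖ ≤ r) (hE : ‖E‖ ≤ r) (n : ℕ) :
    ‖f ^ (n + 1) - E ^ (n + 1)‖ ≤ (n + 1) * ‖f - E‖ * r ^ n := by
  have hr : 0 ≤ r := le_trans (norm_nonneg _) hf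
  induction n with
  | zero => simp
  | succ n ih =>
    have : f ^ (n + 1 + 1) - E ^ (n + 1 + 1) = f * (f ^ (n + 1) - E ^ (n + 1)) + (f - E) * E ^ (n + 1) := by
      ring
    rw [this]
    calc _ ≤ ‖f‖ * ‖f ^ (n + 1) - E ^ (n + 1)‖ + ‖f - E‖ * ‖E‖ ^ (n + 1) := by
          refine (norm_add_le _ _).trans ?_
          rw [norm_mul, norm_mul, norm_pow]
      _ ≤ r * ((n + 1) * ‖f - E‖ * r ^ n) + ‖f - E‖ * r ^ (n + 1) := by gcongr
      _ = _ := by push_cast; ring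

lemma pow_sub_bound2 (f E : ℂ) (r : ℝ) (hf : ‖f‖ ≤ r) (hE : ‖E‖ ≤ r) (n : ℕ) :
    ‖f ^ (n + 2) - E ^ (n + 2) - (n + 2) * E ^ (n + 1) * (f - E)‖ ≤ (n + 2) ^ 2 * ‖f - E‖ ^ 2 * r ^ n := by
  have hr : 0 ≤ r := le_trans (norm_nonneg _) hf
  induction n with
  | zero =>
    have : f ^ (0 + 2) - E ^ (0 + 2) - ((0 : ℕ) + 2) * E ^ (0 + 1) * (f - E) = (f - E) ^ 2 := by
      push_cast; ring
    rw [this, norm_pow]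
    have := sq_nonneg ‖f - E‖
    push_cast
    nlinarith
  | succ n ih =>
    have : f ^ (n + 1 + 2) - E ^ (n + 1 + 2) - ((n + 1 : ℕ) + 2) * E ^ (n + 1 + 1) * (f - E)
        = f * (f ^ (n + 2) - E ^ (n + 2) - (n + 2) * E ^ (n + 1) * (f - E))
          + ((n + 2 : ℕ) : ℂ) * E ^ (n + 1) * (f - E) ^ 2 := by
      push_cast; ring
    rw [this]
    calc _ ≤ ‖f‖ * ‖f ^ (n + 2) - E ^ (n + 2) - (n + 2) * E ^ (n + 1) * (f - E)‖
          + ((n + 2 : ℕ) : ℝ) * ‖E‖ ^ (n + 1) * ‖f - E‖ ^ 2 := by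
          refine (norm_add_le _ _).trans ?_
          rw [norm_mul, norm_mul, norm_mul, norm_pow, norm_pow, Complex.norm_natCast]
      _ ≤ r * ((n + 2) ^ 2 * ‖f - E‖ ^ 2 * r ^ n) + ((n + 2 : ℕ) : ℝ) * r ^ (n + 1) * ‖f - E‖ ^ 2 := by gcongr
      _ = ((n + 2) ^ 2 + (n + 2)) * (‖f - E‖ ^ 2 * r ^ (n + 1)) := by push_cast; ring
      _ ≤ (n + 3) ^ 2 * (‖f - E‖ ^ 2 * r ^ (n + 1)) := by
          gcongr; nlinarith [(Nat.cast_nonneg n : (0:ℝ) ≤ n)]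
      _ = _ := by push_cast; ring

lemma poly_le_exp (c : ℝ) (hc : 0 < c) : ∃ K, 0 < K ∧ ∀ u : ℝ, 0 ≤ u →
    1 + u + u ^ 2 + u ^ 3 ≤ K * Real.exp (c * u) := by
  refine ⟨1 + 1 / c + 2 / c ^ 2 + 6 / c ^ 3, by positivity, fun u hu => ?_⟩
  have h0 := Real.one_le_exp (mul_nonneg hc.le hu)
  have h1 := Real.pow_div_factorial_le_exp (c * u) (by positivity) 1
  have h2 := Real.pow_div_factorial_le_exp (c * u) (by positivity) 2
  have h3 := Real.pow_div_factorial_le_exp (c * u) (by positivity) 3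
  norm_num [Nat.factorial] at h1 h2 h3
  have e1 : u ≤ 1 / c * Real.exp (c * u) := by
    rw [div_mul_eq_mul_div, le_div_iff₀ hc]; linarith
  have e2 : u ^ 2 ≤ 2 / c ^ 2 * Real.exp (c * u) := by
    rw [div_mul_eq_mul_div, le_div_iff₀ (by positivity)]; linarith
  have e3 : u ^ 3 ≤ 6 / c ^ 3 * Real.exp (c * u) := by
    rw [div_mul_eq_mul_div, le_div_iff₀ (by positivity)]; linarith
  linarith

set_option maxHeartbeats 4000000 in
lemma region1 (c C D v0 h0 : ℝ) (hc : 0 < c) (hC : 0 < C) (hD : 0 < D) : ∃ K, 0 < K ∧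
    ∀ (n : ℕ) (s T E v : ℝ) (f h : ℂ), 0 ≤ s → s ≤ D → 0 ≤ T → T ≤ 3 * s →
    ‖f‖ ≤ Real.exp (-c * s) → 0 ≤ E → E ≤ Real.exp (-c * s) →
    |f.re - E| ≤ C * T ^ 2 → |f.im| ≤ C * (T * √T) →
    |h.re - h0| ≤ C * (T + 1 / ((n : ℝ) + 2)) → |h.im| ≤ C * √T → |v - v0| ≤ C * T →
    |v * (h * f ^ (n + 2)).re - v0 * h0 * E ^ (n + 2)| ≤
      K / ((n : ℝ) + 2) * Real.exp (-(c / 2) * (((n : ℝ) + 2) * s)) := by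
  obtain ⟨K1, hK1, hpoly⟩ := poly_le_exp (c / 2) (by positivity)
  set Y := √D with hY
  have hYp : 0 < Y := Real.sqrt_pos.2 hD
  set C2 := 9 * C * Y + 6 * C with hC2
  have hC2p : 0 < C2 := by positivity
  set W := |v0| + 3 * C * D with hW
  set H := |h0| + C * (3 * D + 1) with hH
  have hWp : 0 < W := by positivity
  have hHp : 0 < H := by positivity
  set K0 := W * H * (9 * C + C2 ^ 2) + W * C * 3 + W * C + 3 * C * |h0| + W * (2 * C) * C2 with hK0
  have hK0p : 0 < K0 := by positivity
  refine ⟨K0 * K1 * Real.exp (2 * c * D), by positivity, ?_⟩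
  intro n s T E v f h hs hsD hT hTs hf hE0 hE hre him hh1 hh2 hv
  set N : ℝ := (n : ℝ) + 2 with hN
  have hN2 : 2 ≤ N := by simp [hN]
  have hNp : 0 < N := by linarith
  set r := Real.exp (-c * s) with hr
  have hr0 : 0 < r := Real.exp_pos _
  have hr1 : r ≤ 1 := by rw [hr]; apply Real.exp_le_one_iff.2; nlinarith
  set y := √s with hy
  have hy0 : 0 ≤ y := Real.sqrt_nonneg _
  have hys : y ^ 2 = s := Real.sq_sqrt hs
  have hyY : y ≤ Y := Real.sqrt_le_sqrt hsD
  have hT3 : T ≤ 3 * y ^ 2 := by rw [hys]; exact hTs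
  have hsT : √T ≤ 2 * y := by
    apply Real.sqrt_le_iff.2
    constructor
    · positivity
    · nlinarith [sq_nonneg y]
  have hTT : T * √T ≤ 6 * y ^ 3 := by
    calc T * √T ≤ (3 * y ^ 2) * (2 * y) := by gcongr
      _ = _ := by ring
  have hre' : |f.re - E| ≤ 9 * C * y ^ 4 := by
    calc _ ≤ C * T ^ 2 := hre
      _ ≤ C * (3 * y ^ 2) ^ 2 := by gcongr
      _ = _ := by ring
  have him' : |f.im| ≤ 6 * C * y ^ 3 := by
    calc _ ≤ C * (T * √T) := him
      _ ≤ C * (6 * y ^ 3) := by gcongr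
      _ = _ := by ring
  have hδ : ‖f - (E : ℂ)‖ ≤ C2 * y ^ 3 := by
    refine (Complex.norm_le_abs_re_add_abs_im _).trans ?_
    simp only [Complex.sub_re, Complex.ofReal_re, Complex.sub_im, Complex.ofReal_im, sub_zero]
    calc _ ≤ 9 * C * y ^ 4 + 6 * C * y ^ 3 := add_le_add hre' him'
      _ = 9 * C * y * y ^ 3 + 6 * C * y ^ 3 := by ring
      _ ≤ 9 * C * Y * y ^ 3 + 6 * C * y ^ 3 := by gcongr
      _ = _ := by rw [hC2]; ring
  have hEn : ‖(E : ℂ)‖ ≤ r := by rw [Complex.norm_real, Real.norm_eq_abs, abs_of_nonneg hE0]; exact hE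
  have hp1 := pow_sub_bound f E r hf hEn (n + 1)
  have hp2 := pow_sub_bound2 f E r hf hEn n
  have hrn : r ^ (n + 1) ≤ r ^ n := pow_le_pow_of_le_one hr0.le hr1 (by omega)
  have hrn2 : r ^ (n + 2) ≤ r ^ n := pow_le_pow_of_le_one hr0.le hr1 (by omega)
  have hEN : E ^ (n + 2) ≤ r ^ n := (pow_le_pow_left₀ hE0 hE _).trans hrn2
  have hEN0 : 0 ≤ E ^ (n + 2) := by positivity
  -- imaginary part
  have him2 : |(f ^ (n + 2)).im| ≤ N * C2 * y ^ 3 * r ^ n := by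
    have h1 : (f ^ (n + 2)).im = (f ^ (n + 2) - (E : ℂ) ^ (n + 2)).im := by
      rw [Complex.sub_im, ← Complex.ofReal_pow, Complex.ofReal_im, sub_zero]
    rw [h1]
    refine (Complex.abs_im_le_norm _).trans (hp1.trans ?_)
    push_cast
    calc ((n : ℝ) + 1 + 1) * ‖f - (E : ℂ)‖ * r ^ (n + 1) ≤ N * (C2 * y ^ 3) * r ^ n := by
          gcongr; rw [hN]; linarith
      _ = _ := by ring
  -- real part
  have hre2 : |(f ^ (n + 2)).re - E ^ (n + 2)| ≤ (9 * C + C2 ^ 2) * (N * y ^ 4 + N ^ 2 * y ^ 6) * r ^ n := by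
    have h1 : (f ^ (n + 2)).re - E ^ (n + 2)
        = (f ^ (n + 2) - (E : ℂ) ^ (n + 2) - (n + 2) * (E : ℂ) ^ (n + 1) * (f - E)).re
          + N * E ^ (n + 1) * (f.re - E) := by
      have e1 : ((n : ℂ) + 2) * (E : ℂ) ^ (n + 1) = ((N * E ^ (n + 1) : ℝ) : ℂ) := by
        rw [hN]; push_cast; ring
      rw [e1, Complex.sub_re, Complex.sub_re, Complex.re_ofReal_mul, ← Complex.ofReal_pow, Complex.ofReal_re,
        Complex.sub_re, Complex.ofReal_re]
      ring
    rw [h1]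
    calc _ ≤ ‖f ^ (n + 2) - (E : ℂ) ^ (n + 2) - (n + 2) * (E : ℂ) ^ (n + 1) * (f - E)‖
          + N * E ^ (n + 1) * |f.re - E| := by
          refine (abs_add_le _ _).trans ?_
          gcongr
          · exact Complex.abs_re_le_norm _
          · rw [abs_mul, abs_of_nonneg (by positivity)]
      _ ≤ N ^ 2 * (C2 * y ^ 3) ^ 2 * r ^ n + N * r ^ n * (9 * C * y ^ 4) := by
          gcongr
          · refine hp2.trans ?_
            gcongr
          · exact (pow_le_pow_left₀ hE0 hE _).trans hrn
      _ = C2 ^ 2 * (N ^ 2 * y ^ 6 * r ^ n) + 9 * C * (N * y ^ 4 * r ^ n) := by ring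
      _ ≤ C2 ^ 2 * ((N * y ^ 4 + N ^ 2 * y ^ 6) * r ^ n) + 9 * C * ((N * y ^ 4 + N ^ 2 * y ^ 6) * r ^ n) := by
          gcongr
          · have : 0 ≤ N * y ^ 4 := by positivity
            linarith
          · have : 0 ≤ N ^ 2 * y ^ 6 := by positivity
            linarith
      _ = _ := by ring
  have hvW : |v| ≤ W := by
    have : |v| ≤ |v0| + |v - v0| := by
      calc |v| = |v0 + (v - v0)| := by ring_nf
        _ ≤ _ := abs_add_le _ _
    have h2 : C * T ≤ C * (3 * D) := by gcongr; linarith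
    rw [hW]; linarith
  have hN1 : 1 / N ≤ 1 := by rw [div_le_one hNp]; linarith
  have hhH : |h.re| ≤ H := by
    have : |h.re| ≤ |h0| + |h.re - h0| := by
      calc |h.re| = |h0 + (h.re - h0)| := by ring_nf
        _ ≤ _ := abs_add_le _ _
    have h2 : C * (T + 1 / N) ≤ C * (3 * D + 1) := by gcongr; linarith
    rw [hH]; linarith
  have hdecomp : v * (h * f ^ (n + 2)).re - v0 * h0 * E ^ (n + 2)
      = v * h.re * ((f ^ (n + 2)).re - E ^ (n + 2)) + (v * (h.re - h0) + (v - v0) * h0) * E ^ (n + 2)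
        - v * h.im * (f ^ (n + 2)).im := by
    rw [Complex.mul_re]; ring
  have hmain : |v * (h * f ^ (n + 2)).re - v0 * h0 * E ^ (n + 2)| ≤
      K0 * r ^ n * (1 / N * (1 + N * y ^ 2 + (N * y ^ 2) ^ 2 + (N * y ^ 2) ^ 3)) := by
    rw [hdecomp]
    have b1 : |v * h.re * ((f ^ (n + 2)).re - E ^ (n + 2))|
        ≤ W * H * ((9 * C + C2 ^ 2) * (N * y ^ 4 + N ^ 2 * y ^ 6) * r ^ n) := by
      rw [abs_mul, abs_mul]; gcongr
    have b2 : |(v * (h.re - h0) + (v - v0) * h0) * E ^ (n + 2)|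
        ≤ (W * (C * (3 * y ^ 2 + 1 / N)) + C * (3 * y ^ 2) * |h0|) * r ^ n := by
      rw [abs_mul, abs_of_nonneg hEN0]
      gcongr
      refine (abs_add_le _ _).trans ?_
      rw [abs_mul, abs_mul]
      gcongr
      · refine hh1.trans ?_
        gcongr
      · refine hv.trans ?_
        gcongr
    have b3 : |v * h.im * (f ^ (n + 2)).im| ≤ W * (C * (2 * y)) * (N * C2 * y ^ 3 * r ^ n) := by
      rw [abs_mul, abs_mul]
      gcongr
      refine hh2.trans ?_
      gcongr
    set P := 1 / N * (1 + N * y ^ 2 + (N * y ^ 2) ^ 2 + (N * y ^ 2) ^ 3) with hP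
    have hPe : P = 1 / N + y ^ 2 + N * y ^ 4 + N ^ 2 * y ^ 6 := by
      rw [hP]; field_simp
    have q1 : 0 ≤ 1 / N := by positivity
    have q2 : 0 ≤ y ^ 2 := by positivity
    have q3 : 0 ≤ N * y ^ 4 := by positivity
    have q4 : 0 ≤ N ^ 2 * y ^ 6 := by positivity
    have p1 : N * y ^ 4 + N ^ 2 * y ^ 6 ≤ P := by linarith
    have p2 : y ^ 2 ≤ P := by linarith
    have p3 : 1 / N ≤ P := by linarith
    have p4 : N * y ^ 4 ≤ P := by linarith
    have hrn0 : 0 ≤ r ^ n := by positivity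
    calc _ ≤ |v * h.re * ((f ^ (n + 2)).re - E ^ (n + 2))| + |(v * (h.re - h0) + (v - v0) * h0) * E ^ (n + 2)|
        + |v * h.im * (f ^ (n + 2)).im| :=
          (abs_sub _ _).trans (by gcongr; exact abs_add_le _ _)
      _ ≤ W * H * ((9 * C + C2 ^ 2) * (N * y ^ 4 + N ^ 2 * y ^ 6) * r ^ n)
        + (W * (C * (3 * y ^ 2 + 1 / N)) + C * (3 * y ^ 2) * |h0|) * r ^ n
        + W * (C * (2 * y)) * (N * C2 * y ^ 3 * r ^ n) := by linarith
      _ = r ^ n * (W * H * (9 * C + C2 ^ 2) * (N * y ^ 4 + N ^ 2 * y ^ 6)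
        + W * C * 3 * y ^ 2 + W * C * (1 / N) + 3 * C * |h0| * y ^ 2
        + W * (2 * C) * C2 * (N * y ^ 4)) := by ring
      _ ≤ r ^ n * (W * H * (9 * C + C2 ^ 2) * P
        + W * C * 3 * P + W * C * P + 3 * C * |h0| * P
        + W * (2 * C) * C2 * P) := by gcongr
      _ = _ := by rw [hK0]; ring
  refine hmain.trans ?_
  rw [hys]
  have hexp : r ^ n = Real.exp (2 * c * s) * (Real.exp (-(c / 2) * (N * s)) * Real.exp (-(c / 2) * (N * s))) := by
    rw [hr, ← Real.exp_nat_mul, ← Real.exp_add, ← Real.exp_add]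
    congr 1
    rw [hN]; ring
  have hpo := hpoly (N * s) (by positivity)
  have hcancel : Real.exp (-(c / 2) * (N * s)) * Real.exp (c / 2 * (N * s)) = 1 := by
    rw [← Real.exp_add]; simp
  have hexp2 : Real.exp (2 * c * s) ≤ Real.exp (2 * c * D) := by
    apply Real.exp_le_exp.2; gcongr
  calc K0 * r ^ n * (1 / N * (1 + N * s + (N * s) ^ 2 + (N * s) ^ 3))
      ≤ K0 * (Real.exp (2 * c * D) * (Real.exp (-(c / 2) * (N * s)) * Real.exp (-(c / 2) * (N * s))))
        * (1 / N * (K1 * Real.exp (c / 2 * (N * s)))) := by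
        rw [hexp]; gcongr
    _ = K0 * Real.exp (2 * c * D) * Real.exp (-(c / 2) * (N * s)) * (1 / N) * K1 *
        (Real.exp (-(c / 2) * (N * s)) * Real.exp (c / 2 * (N * s))) := by ring
    _ = _ := by rw [hcancel]; ring

/-- squared length -/
noncomputable def TT {e : ℕ} (θ : Fin e → ℝ) (φ : ℝ) : ℝ := ∑ k, θ k ^ 2 + φ ^ 2
/-- squared sines -/
noncomputable def Sn {e : ℕ} (θ : Fin e → ℝ) (φ : ℝ) : ℝ := ∑ k, Real.sin (θ k) ^ 2 + Real.sin φ ^ 2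

/-- the closed box -/
def Box {e : ℕ} (θ : Fin e → ℝ) (φ : ℝ) : Prop := (∀ k, |θ k| ≤ Real.pi) ∧ |φ| ≤ Real.pi

lemma sin_sq_lower (t : ℝ) (ht : |t| ≤ Real.pi / 2) : t ^ 2 ≤ 3 * Real.sin t ^ 2 := by
  have h1 := Real.mul_abs_le_abs_sin ht
  have hpi := Real.pi_lt_d2
  have hpp := Real.pi_pos
  have h2 : (2 / Real.pi * |t|) ^ 2 ≤ |Real.sin t| ^ 2 := by gcongr
  rw [mul_pow, sq_abs, sq_abs] at h2
  have h3 : (1 : ℝ) / 3 ≤ (2 / Real.pi) ^ 2 := by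
    rw [div_pow, div_le_div_iff₀ (by norm_num) (by positivity)]
    nlinarith
  nlinarith [sq_nonneg t]

lemma sin_sq_upper (t : ℝ) : Real.sin t ^ 2 ≤ t ^ 2 := sq_le_sq.2 Real.abs_sin_le_abs

lemma Sn_le_TT {e : ℕ} (θ : Fin e → ℝ) (φ : ℝ) : Sn θ φ ≤ TT θ φ :=
  add_le_add (Finset.sum_le_sum fun _ _ => sin_sq_upper _) (sin_sq_upper _)

lemma Sn_nonneg {e : ℕ} (θ : Fin e → ℝ) (φ : ℝ) : 0 ≤ Sn θ φ := by unfold Sn; positivity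
lemma TT_nonneg {e : ℕ} (θ : Fin e → ℝ) (φ : ℝ) : 0 ≤ TT θ φ := by unfold TT; positivity

lemma Sn_le {e : ℕ} (θ : Fin e → ℝ) (φ : ℝ) : Sn θ φ ≤ e + 1 := by
  unfold Sn
  refine add_le_add ?_ (Real.sin_sq_le_one _)
  calc ∑ k, Real.sin (θ k) ^ 2 ≤ ∑ k : Fin e, (1 : ℝ) := Finset.sum_le_sum fun k _ => Real.sin_sq_le_one _
    _ = e := by simp

lemma exp_neg_le_inv (x : ℝ) (hx : 0 < x) : Real.exp (-x) ≤ 1 / x := by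
  rw [Real.exp_neg, ← one_div]
  apply one_div_le_one_div_of_le hx
  linarith [Real.add_one_le_exp x]

lemma mul_exp_neg_le (x : ℝ) : x * Real.exp (-x) ≤ 1 := by
  have h := Real.add_one_le_exp x
  have h2 : Real.exp x * Real.exp (-x) = 1 := by rw [← Real.exp_add]; simp
  nlinarith [Real.exp_pos (-x)]

set_option maxHeartbeats 4000000 in
lemma pointwise {e : ℕ} (v : (Fin e → ℝ) → ℝ) (v0 h0 c C : ℝ) (f : (Fin e → ℝ) → ℝ → ℂ)
    (h : ℕ → ℝ → ℂ) (E : (Fin e → ℝ) → ℝ → ℝ) (hc : 0 < c) (hC : 0 < C)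
    (hf : ∀ θ φ, ‖f θ φ‖ ≤ Real.exp (-c * Sn θ φ))
    (hE0 : ∀ θ φ, 0 ≤ E θ φ)
    (hE : ∀ θ φ, E θ φ ≤ Real.exp (-c * TT θ φ))
    (hre : ∀ θ φ, |(f θ φ).re - E θ φ| ≤ C * TT θ φ ^ 2)
    (him : ∀ θ φ, |(f θ φ).im| ≤ C * (TT θ φ * √(TT θ φ)))
    (hh : ∀ n φ, ‖h n φ‖ ≤ C)
    (hh1 : ∀ n φ, |(h (n + 2) φ).re - h0| ≤ C * (φ ^ 2 + 1 / ((n : ℝ) + 2)))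
    (hh2 : ∀ n φ, |(h n φ).im| ≤ C * |φ|)
    (hv : ∀ θ φ, |v θ - v0| ≤ C * TT θ φ)
    (hv2 : ∀ θ k, |v θ| ≤ C * (1 + Real.cos (θ k)))
    (hvC : ∀ θ, |v θ| ≤ C)
    (h3 : ∀ θ φ, Box θ φ → (∀ k, |θ k| ≤ Real.pi / 2) → Real.pi / 2 ≤ |φ| → ‖f θ φ‖ ≤ Real.exp (-c)) :
    ∃ K c', 0 < K ∧ 0 < c' ∧ ∀ (n : ℕ) θ φ, Box θ φ →
      |v θ * (h (n + 2) φ * f θ φ ^ (n + 2)).re - v0 * h0 * E θ φ ^ (n + 2)|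
        ≤ K / ((n : ℝ) + 2) * Real.exp (-c' * (((n : ℝ) + 2) * Sn θ φ)) := by
  have hD : (0 : ℝ) < (e : ℝ) + 1 := by positivity
  have hD1 : (1 : ℝ) ≤ (e : ℝ) + 1 := by simp
  obtain ⟨K, hK, hreg⟩ := region1 c C (e + 1) v0 h0 hc hC hD
  set c' := c / 2 / (e + 1) with hc'
  have hc'p : 0 < c' := by positivity
  have hc'le : c' ≤ c / 2 := div_le_self (by positivity) hD1
  refine ⟨K + 2 / c * (C * C + |v0 * h0| + C * C), c', by positivity, hc'p, ?_⟩
  intro n θ φ hbox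
  set N : ℝ := (n : ℝ) + 2 with hN
  have hNp : 0 < N := by positivity
  set s := Sn θ φ with hs
  have hs0 : 0 ≤ s := Sn_nonneg _ _
  have hsD : s ≤ e + 1 := Sn_le _ _
  set T := TT θ φ with hT
  have hT0 : 0 ≤ T := TT_nonneg _ _
  have hsT : s ≤ T := Sn_le_TT _ _
  have hφT : φ ^ 2 ≤ T := by
    rw [hT, TT]; have : 0 ≤ ∑ k, θ k ^ 2 := by positivity
    linarith
  have hexpc : Real.exp (-(c / 2) * (N * s)) ≤ Real.exp (-c' * (N * s)) := by
    apply Real.exp_le_exp.2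
    have : 0 ≤ N * s := by positivity
    nlinarith
  have hexpe : Real.exp (-(c / 2) * N) ≤ Real.exp (-c' * (N * s)) := by
    apply Real.exp_le_exp.2
    have : c' * s ≤ c / 2 := by
      rw [hc', div_mul_eq_mul_div, div_le_iff₀ hD]
      gcongr
    nlinarith
  have hinv : Real.exp (-(c / 2) * N) ≤ 2 / c / N := by
    have := exp_neg_le_inv (c / 2 * N) (by positivity)
    rw [show -(c / 2) * N = -(c / 2 * N) by ring]
    refine this.trans (le_of_eq ?_)
    field_simp
  have e0 : 0 < Real.exp (-c' * (N * s)) := Real.exp_pos _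
  by_cases h1 : (∀ k, |θ k| ≤ Real.pi / 2)
  · by_cases h2 : |φ| ≤ Real.pi / 2
    · -- region 1
      have hTs : T ≤ 3 * s := by
        rw [hT, hs, TT, Sn, mul_add, Finset.mul_sum]
        exact add_le_add (Finset.sum_le_sum fun k _ => sin_sq_lower _ (h1 k)) (sin_sq_lower _ h2)
      have hsqrt : |φ| ≤ √T := by
        apply Real.le_sqrt_of_sq_le; rwa [sq_abs]
      have := hreg n s T (E θ φ) (v θ) (f θ φ) (h (n + 2) φ) hs0 hsD hT0 hTs (hf θ φ) (hE0 _ _)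
        ((hE θ φ).trans (Real.exp_le_exp.2 (by nlinarith))) (hre θ φ) (him θ φ)
        ((hh1 n φ).trans (by gcongr)) ((hh2 (n + 2) φ).trans (by gcongr)) (hv θ φ)
      refine this.trans ?_
      gcongr
      have : 0 < 2 / c * (C * C + |v0 * h0| + C * C) := by positivity
      linarith
    · -- region 3
      push Not at h2
      have hTge : 1 ≤ T := by
        have : 1 ≤ |φ| := by linarith [Real.pi_gt_three]
        have : 1 ≤ φ ^ 2 := by rw [← sq_abs]; nlinarith
        linarith
      have hEN : E θ φ ^ (n + 2) ≤ Real.exp (-(c / 2) * N) * Real.exp (-(c / 2) * (N * s)) := by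
        calc _ ≤ Real.exp (-c * T) ^ (n + 2) := pow_le_pow_left₀ (hE0 _ _) (hE _ _) _
          _ = Real.exp (-c * (N * T)) := by rw [← Real.exp_nat_mul]; congr 1; rw [hN]; push_cast; ring
          _ ≤ _ := by
            rw [← Real.exp_add]; apply Real.exp_le_exp.2
            have : N * (1 + s) ≤ N * (2 * T) := by gcongr; linarith
            nlinarith
      have hfN : ‖f θ φ‖ ^ (n + 2) ≤ Real.exp (-(c / 2) * N) * Real.exp (-(c / 2) * N) := by
        calc _ ≤ Real.exp (-c) ^ (n + 2) := pow_le_pow_left₀ (norm_nonneg _) (h3 θ φ hbox h1 h2.le) _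
          _ = _ := by rw [← Real.exp_nat_mul, ← Real.exp_add]; congr 1; rw [hN]; push_cast; ring
      calc _ ≤ |v θ| * (‖h (n + 2) φ‖ * ‖f θ φ‖ ^ (n + 2)) + |v0 * h0| * E θ φ ^ (n + 2) := by
            refine (abs_sub _ _).trans ?_
            rw [abs_mul, abs_mul (v0 * h0), abs_of_nonneg (pow_nonneg (hE0 θ φ) (n + 2))]
            gcongr
            refine (Complex.abs_re_le_norm _).trans ?_
            rw [norm_mul, norm_pow]
        _ ≤ C * (C * (Real.exp (-(c / 2) * N) * Real.exp (-(c / 2) * N)))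
            + |v0 * h0| * (Real.exp (-(c / 2) * N) * Real.exp (-(c / 2) * (N * s))) := by
            gcongr
            · exact hvC θ
            · exact hh _ _
        _ ≤ C * (C * (2 / c / N * Real.exp (-c' * (N * s))))
            + |v0 * h0| * (2 / c / N * Real.exp (-c' * (N * s))) := by gcongr
        _ = (2 / c * (C * C + |v0 * h0|)) / N * Real.exp (-c' * (N * s)) := by ring
        _ ≤ _ := by
            gcongr
            have : 0 < 2 / c * (C * C) := by positivity
            nlinarith
  · push Not at h1
    obtain ⟨k, hk⟩ := h1
    have hTge : 1 ≤ T := by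
      have h1 : 1 ≤ |θ k| := by linarith [Real.pi_gt_three]
      have : 1 ≤ (θ k) ^ 2 := by rw [← sq_abs]; nlinarith
      have h2 : θ k ^ 2 ≤ ∑ k, θ k ^ 2 := Finset.single_le_sum (f := fun k => θ k ^ 2) (fun _ _ => sq_nonneg _) (Finset.mem_univ k)
      rw [hT, TT]; nlinarith [sq_nonneg φ]
    have hEN : E θ φ ^ (n + 2) ≤ Real.exp (-(c / 2) * N) * Real.exp (-(c / 2) * (N * s)) := by
      calc _ ≤ Real.exp (-c * T) ^ (n + 2) := pow_le_pow_left₀ (hE0 _ _) (hE _ _) _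
        _ = Real.exp (-c * (N * T)) := by rw [← Real.exp_nat_mul]; congr 1; rw [hN]; push_cast; ring
        _ ≤ _ := by
          rw [← Real.exp_add]; apply Real.exp_le_exp.2
          have : N * (1 + s) ≤ N * (2 * T) := by gcongr; linarith
          nlinarith
    have hfN : ‖f θ φ‖ ^ (n + 2) ≤ Real.exp (-(c / 2) * (N * s)) * Real.exp (-(c / 2) * (N * s)) := by
      calc _ ≤ Real.exp (-c * s) ^ (n + 2) := pow_le_pow_left₀ (norm_nonneg _) (hf θ φ) _
        _ = _ := by rw [← Real.exp_nat_mul, ← Real.exp_add]; congr 1; rw [hN]; push_cast; ring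
    have hvs : |v θ| ≤ C * s := by
      refine (hv2 θ k).trans ?_
      gcongr
      have hcos : Real.cos (θ k) ≤ 0 := by
        rw [← Real.cos_abs]
        apply Real.cos_nonpos_of_pi_div_two_le_of_le hk.le
        linarith [hbox.1 k, Real.pi_pos]
      have h2 : Real.sin (θ k) ^ 2 ≤ ∑ k, Real.sin (θ k) ^ 2 := Finset.single_le_sum (f := fun k => Real.sin (θ k) ^ 2) (fun _ _ => sq_nonneg _) (Finset.mem_univ k)
      rw [hs, Sn]
      nlinarith [Real.sin_sq_add_cos_sq (θ k), Real.neg_one_le_cos (θ k), sq_nonneg (Real.sin φ)]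
    have hsexp : s * Real.exp (-(c / 2) * (N * s)) ≤ 2 / c / N := by
      have := mul_exp_neg_le (c / 2 * (N * s))
      rw [show -(c / 2) * (N * s) = -(c / 2 * (N * s)) by ring]
      rw [div_div, le_div_iff₀ (by positivity)]
      nlinarith
    calc _ ≤ |v θ| * (‖h (n + 2) φ‖ * ‖f θ φ‖ ^ (n + 2)) + |v0 * h0| * E θ φ ^ (n + 2) := by
          refine (abs_sub _ _).trans ?_
          rw [abs_mul, abs_mul (v0 * h0), abs_of_nonneg (pow_nonneg (hE0 θ φ) (n + 2))]
          gcongr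
          refine (Complex.abs_re_le_norm _).trans ?_
          rw [norm_mul, norm_pow]
      _ ≤ (C * s) * (C * (Real.exp (-(c / 2) * (N * s)) * Real.exp (-(c / 2) * (N * s))))
          + |v0 * h0| * (Real.exp (-(c / 2) * N) * Real.exp (-(c / 2) * (N * s))) := by
          gcongr
          exact hh _ _
      _ = C * C * ((s * Real.exp (-(c / 2) * (N * s))) * Real.exp (-(c / 2) * (N * s)))
          + |v0 * h0| * (Real.exp (-(c / 2) * N) * Real.exp (-(c / 2) * (N * s))) := by ring
      _ ≤ C * C * (2 / c / N * Real.exp (-c' * (N * s)))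
          + |v0 * h0| * (2 / c / N * Real.exp (-c' * (N * s))) := by gcongr
      _ = (2 / c * (C * C + |v0 * h0|)) / N * Real.exp (-c' * (N * s)) := by ring
      _ ≤ _ := by
          gcongr
          have : 0 < 2 / c * (C * C) := by positivity
          nlinarith

end NDrift

namespace NDrift

lemma gauss_int (b : ℝ) (hb : 0 < b) : MeasureTheory.Integrable (fun t : ℝ => Real.exp (-b * t ^ 2)) :=
  integrable_exp_neg_mul_sq hb

lemma gauss_box_le (b : ℝ) (hb : 0 < b) :
    ∫ t, Real.exp (-b * t ^ 2) ∂mu1 ≤ √(Real.pi / b) := by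
  rw [← integral_gaussian]
  exact MeasureTheory.setIntegral_le_integral (gauss_int b hb) (Filter.Eventually.of_forall fun t => (Real.exp_pos _).le)

lemma gauss_box (b : ℝ) (hb : 0 < b) :
    |∫ t, Real.exp (-b * t ^ 2) ∂mu1 - √(Real.pi / b)| ≤ 2 / (b * Real.pi ^ 2) * √(2 * Real.pi / b) := by
  have h1 := gauss_box_le b hb
  rw [abs_sub_comm, abs_of_nonneg (by linarith)]
  have h2 := MeasureTheory.integral_add_compl (measurableSet_Ioc (a := -Real.pi) (b := Real.pi)) (gauss_int b hb)
  rw [integral_gaussian] at h2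
  have h3 : ∫ t, Real.exp (-b * t ^ 2) ∂mu1 = ∫ t in Set.Ioc (-Real.pi) Real.pi, Real.exp (-b * t ^ 2) := rfl
  have h4 : ∫ t in (Set.Ioc (-Real.pi) Real.pi)ᶜ, Real.exp (-b * t ^ 2) ≤
      ∫ t in (Set.Ioc (-Real.pi) Real.pi)ᶜ, (2 / (b * Real.pi ^ 2)) * Real.exp (-(b / 2) * t ^ 2) := by
    refine MeasureTheory.setIntegral_mono_on (gauss_int b hb).integrableOn
      (((gauss_int (b / 2) (by positivity)).const_mul _).integrableOn) measurableSet_Ioc.compl ?_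
    intro t ht
    have hpi := Real.pi_pos
    have ht2 : Real.pi ^ 2 ≤ t ^ 2 := by
      rw [Set.mem_compl_iff, Set.mem_Ioc, not_and_or, not_lt, not_le] at ht
      rcases ht with h | h <;> nlinarith
    have e1 : Real.exp (-b * t ^ 2) = Real.exp (-(b / 2 * t ^ 2)) * Real.exp (-(b / 2) * t ^ 2) := by
      rw [← Real.exp_add]; congr 1; ring
    rw [e1]
    refine mul_le_mul_of_nonneg_right ?_ (Real.exp_pos _).le
    calc Real.exp (-(b / 2 * t ^ 2)) ≤ Real.exp (-(b / 2 * Real.pi ^ 2)) := by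
          apply Real.exp_le_exp.2
          nlinarith
      _ ≤ 1 / (b / 2 * Real.pi ^ 2) := exp_neg_le_inv _ (by positivity)
      _ = _ := by field_simp
  have h5 : ∫ t in (Set.Ioc (-Real.pi) Real.pi)ᶜ, (2 / (b * Real.pi ^ 2)) * Real.exp (-(b / 2) * t ^ 2) ≤
      ∫ t, (2 / (b * Real.pi ^ 2)) * Real.exp (-(b / 2) * t ^ 2) :=
    MeasureTheory.setIntegral_le_integral ((gauss_int (b / 2) (by positivity)).const_mul _)
      (Filter.Eventually.of_forall fun t => by
        have := Real.exp_pos (-(b / 2) * t ^ 2)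
        show (0 : ℝ) ≤ _
        positivity)
  rw [MeasureTheory.integral_const_mul (μ := MeasureTheory.volume), integral_gaussian] at h5
  have h6 : Real.pi / (b / 2) = 2 * Real.pi / b := by field_simp
  rw [h6] at h5
  linarith

/-- normalized one-dimensional Gaussian integral -/
noncomputable def JJ (σ x : ℝ) : ℝ := √x * ∫ t, Real.exp (-(x * σ / 2) * t ^ 2) ∂mu1

lemma JJ_nonneg (σ x : ℝ) : 0 ≤ JJ σ x :=
  mul_nonneg (Real.sqrt_nonneg _) (MeasureTheory.integral_nonneg fun t => (Real.exp_pos _).le)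

lemma JJ_bound (σ : ℝ) (hσ : 0 < σ) : ∃ C, 0 < C ∧ ∀ x : ℝ, 1 ≤ x →
    |JJ σ x - √(2 * Real.pi / σ)| ≤ C / x := by
  have hpi := Real.pi_pos
  refine ⟨2 / (σ / 2 * Real.pi ^ 2) * √(4 * Real.pi / σ), by positivity, ?_⟩
  intro x hx
  have hx0 : 0 < x := by linarith
  have h := gauss_box (x * σ / 2) (by positivity)
  have e1 : √x * √(Real.pi / (x * σ / 2)) = √(2 * Real.pi / σ) := by
    rw [← Real.sqrt_mul hx0.le]; congr 1; field_simp
  have e2 : √x * √(2 * Real.pi / (x * σ / 2)) = √(4 * Real.pi / σ) := by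
    rw [← Real.sqrt_mul hx0.le]; congr 1; field_simp; ring
  unfold JJ
  rw [← e1, ← mul_sub, abs_mul, abs_of_nonneg (Real.sqrt_nonneg x)]
  calc _ ≤ √x * (2 / (x * σ / 2 * Real.pi ^ 2) * √(2 * Real.pi / (x * σ / 2))) :=
        mul_le_mul_of_nonneg_left h (Real.sqrt_nonneg _)
    _ = 2 / (x * σ / 2 * Real.pi ^ 2) * (√x * √(2 * Real.pi / (x * σ / 2))) := by ring
    _ = _ := by rw [e2]; field_simp

lemma mul_close (f g : ℝ → ℝ) (f0 g0 C D : ℝ) (hC : 0 < C) (hD : 0 < D)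
    (hf : ∀ x, 1 ≤ x → |f x - f0| ≤ C / x) (hg : ∀ x, 1 ≤ x → |g x - g0| ≤ D / x) :
    ∃ K, 0 < K ∧ ∀ x, 1 ≤ x → |f x * g x - f0 * g0| ≤ K / x := by
  refine ⟨C * (|g0| + D) + |f0| * D, by positivity, ?_⟩
  intro x hx
  have hx0 : 0 < x := by linarith
  have hgx : |g x| ≤ |g0| + D := by
    have h1 := hg x hx
    have h2 : D / x ≤ D := div_le_self hD.le hx
    have h3 : |g x| ≤ |g x - g0| + |g0| := by
      have := abs_add_le (g x - g0) g0; simpa using this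
    linarith
  have e : f x * g x - f0 * g0 = (f x - f0) * g x + f0 * (g x - g0) := by ring
  rw [e]
  calc _ ≤ |f x - f0| * |g x| + |f0| * |g x - g0| := by
        rw [← abs_mul, ← abs_mul]; exact abs_add_le _ _
    _ ≤ C / x * (|g0| + D) + |f0| * (D / x) := by
        gcongr
        · exact hf x hx
        · exact hg x hx
    _ = _ := by field_simp

lemma prod_close {ι : Type*} (s : Finset ι) (f : ι → ℝ → ℝ) (f0 : ι → ℝ)
    (hf : ∀ k, ∃ C, 0 < C ∧ ∀ x : ℝ, 1 ≤ x → |f k x - f0 k| ≤ C / x) :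
    ∃ K, 0 < K ∧ ∀ x, 1 ≤ x → |∏ k ∈ s, f k x - ∏ k ∈ s, f0 k| ≤ K / x := by
  classical
  induction s using Finset.induction_on with
  | empty => exact ⟨1, one_pos, fun x hx => by simp; linarith⟩
  | insert a s ha ih =>
    obtain ⟨K, hK, h⟩ := ih
    obtain ⟨C, hC, h'⟩ := hf a
    simp only [Finset.prod_insert ha]
    exact mul_close _ _ _ _ _ _ hC hK h' h

lemma sin_int (x : ℝ) (hx : 0 < x) :
    ∫ t, Real.exp (-(x * Real.sin t ^ 2)) ∂mu1 ≤ 3 * √(3 * Real.pi) / √x := by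
  have hpi := Real.pi_pos
  set g : ℝ → ℝ := fun t => Real.exp (-(x / 3) * t ^ 2) with hg
  have hgi : MeasureTheory.Integrable g := gauss_int (x / 3) (by positivity)
  have hg0 : ∀ t, 0 ≤ g t := fun t => (Real.exp_pos _).le
  have hg1 : MeasureTheory.Integrable (fun t => g (t - Real.pi)) := hgi.comp_sub_right _
  have hg2 : MeasureTheory.Integrable (fun t => g (t + Real.pi)) := hgi.comp_add_right _
  have hsum : MeasureTheory.Integrable (fun t => g t + g (t - Real.pi) + g (t + Real.pi)) :=
    (hgi.add hg1).add hg2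
  have key : ∀ t s : ℝ, Real.sin t ^ 2 = Real.sin s ^ 2 → |s| ≤ Real.pi / 2 →
      Real.exp (-(x * Real.sin t ^ 2)) ≤ g s := by
    intro t s h hs
    apply Real.exp_le_exp.2
    have := sin_sq_lower s hs
    rw [h]
    nlinarith
  have h1 : ∫ t, Real.exp (-(x * Real.sin t ^ 2)) ∂mu1 ≤ ∫ t, (g t + g (t - Real.pi) + g (t + Real.pi)) ∂mu1 := by
    refine MeasureTheory.integral_mono_ae (integrable_mu1 _ (by fun_prop)) hsum.integrableOn ?_
    filter_upwards [mu1_ae] with t ht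
    have a1 := hg0 t
    have a2 := hg0 (t - Real.pi)
    have a3 := hg0 (t + Real.pi)
    by_cases h : |t| ≤ Real.pi / 2
    · have := key t t rfl h
      linarith
    · rw [abs_le, not_and_or, not_le, not_le] at h
      rcases h with h | h
      · have := key t (t + Real.pi) (by rw [Real.sin_add_pi]; ring) (by
          rw [abs_le]; constructor <;> linarith [ht.1])
        linarith
      · have := key t (t - Real.pi) (by rw [Real.sin_sub_pi]; ring) (by
          rw [abs_le]; constructor <;> linarith [ht.2])
        linarith
  have h2 : ∫ t, (g t + g (t - Real.pi) + g (t + Real.pi)) ∂mu1 ≤ ∫ t, (g t + g (t - Real.pi) + g (t + Real.pi)) :=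
    MeasureTheory.setIntegral_le_integral hsum (Filter.Eventually.of_forall fun t => by
      have a1 := hg0 t
      have a2 := hg0 (t - Real.pi)
      have a3 := hg0 (t + Real.pi)
      show (0 : ℝ) ≤ _
      positivity)
  have h3 : ∫ t, (g t + g (t - Real.pi) + g (t + Real.pi)) = 3 * √(3 * Real.pi) / √x := by
    have hg3 : MeasureTheory.Integrable (fun t => g t + g (t - Real.pi)) := hgi.add hg1
    rw [MeasureTheory.integral_add hg3 hg2, MeasureTheory.integral_add hgi hg1,
      MeasureTheory.integral_sub_right_eq_self g, MeasureTheory.integral_add_right_eq_self g]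
    have : ∫ t, g t = √(3 * Real.pi) / √x := by
      rw [integral_gaussian, ← Real.sqrt_div (by positivity)]
      congr 1; field_simp
    rw [this]; ring
  linarith

lemma iter_prod {e : ℕ} (g : Fin e → ℝ → ℝ) (g' : ℝ → ℝ) :
    ∫ θ, ∫ φ, (∏ k, g k (θ k)) * g' φ ∂mu1 ∂(mue e) = (∏ k, ∫ t, g k t ∂mu1) * ∫ t, g' t ∂mu1 := by
  simp_rw [MeasureTheory.integral_const_mul]
  rw [MeasureTheory.integral_mul_const]
  unfold mue
  rw [MeasureTheory.integral_fintype_prod_eq_prod]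

lemma inner_cont {e : ℕ} (F : (Fin e → ℝ) → ℝ → ℝ) (hF : Continuous (Function.uncurry F)) :
    Continuous (fun θ => ∫ φ, F θ φ ∂mu1) := by
  simp_rw [integral_mu1]
  exact intervalIntegral.continuous_parametric_intervalIntegral_of_continuous' hF _ _

lemma main_int {e : ℕ} (F : ℕ → (Fin e → ℝ) → ℝ → ℝ) (σ : Fin e → ℝ) (σ' K c' m : ℝ)
    (hσ : ∀ k, 0 < σ k) (hσ' : 0 < σ') (hK : 0 < K) (hc' : 0 < c')
    (hFc : ∀ n, Continuous (Function.uncurry (F n)))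
    (hF : ∀ (n : ℕ) θ φ, Box θ φ →
      |F n θ φ - m * Real.exp (-(∑ k, σ k * θ k ^ 2 / 2 + σ' * φ ^ 2 / 2)) ^ (n + 2)|
        ≤ K / ((n : ℝ) + 2) * Real.exp (-c' * (((n : ℝ) + 2) * Sn θ φ))) :
    ∃ C, 0 < C ∧ ∀ n : ℕ,
      |(∫ θ, ∫ φ, F n θ φ ∂mu1 ∂(mue e)) * √((n : ℝ) + 2) ^ (e + 1)
        - m * ((∏ k, √(2 * Real.pi / σ k)) * √(2 * Real.pi / σ'))| ≤ C / ((n : ℝ) + 2) := by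
  have hpi := Real.pi_pos
  obtain ⟨K1, hK1, h1⟩ := prod_close Finset.univ (fun k => JJ (σ k)) (fun k => √(2 * Real.pi / σ k))
    (fun k => JJ_bound (σ k) (hσ k))
  obtain ⟨K2, hK2, h2⟩ := JJ_bound σ' hσ'
  obtain ⟨K3, hK3, h3⟩ := mul_close _ _ _ _ _ _ hK1 hK2 h1 h2
  refine ⟨K * (3 * √(3 * Real.pi) / √c') ^ (e + 1) + |m| * K3, by positivity, ?_⟩
  intro n
  set N : ℝ := (n : ℝ) + 2 with hN
  have hN1 : 1 ≤ N := by rw [hN]; linarith [(Nat.cast_nonneg n : (0 : ℝ) ≤ n)]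
  have hN0 : 0 < N := by linarith
  -- main term
  have hEeq : ∀ (θ : Fin e → ℝ) φ, Real.exp (-(∑ k, σ k * θ k ^ 2 / 2 + σ' * φ ^ 2 / 2)) ^ (n + 2) =
      (∏ k, Real.exp (-(N * σ k / 2) * θ k ^ 2)) * Real.exp (-(N * σ' / 2) * φ ^ 2) := by
    intro θ φ
    rw [← Real.exp_sum, ← Real.exp_add, ← Real.exp_nat_mul]
    congr 1
    rw [hN]
    push_cast
    rw [neg_add, mul_add, ← Finset.sum_neg_distrib, Finset.mul_sum]
    congr 1
    · exact Finset.sum_congr rfl fun k _ => by ring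
    · ring
  have hmain : (∫ θ, ∫ φ, Real.exp (-(∑ k, σ k * θ k ^ 2 / 2 + σ' * φ ^ 2 / 2)) ^ (n + 2) ∂mu1 ∂(mue e))
      * √N ^ (e + 1) = (∏ k, JJ (σ k) N) * JJ σ' N := by
    simp_rw [hEeq]
    rw [iter_prod (fun k t => Real.exp (-(N * σ k / 2) * t ^ 2)) (fun t => Real.exp (-(N * σ' / 2) * t ^ 2))]
    unfold JJ
    rw [Finset.prod_mul_distrib, Finset.prod_const, Finset.card_univ, Fintype.card_fin]
    ring
  -- error
  have hSeq : ∀ (θ : Fin e → ℝ) φ, K / N * Real.exp (-c' * (N * Sn θ φ)) =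
      (∏ k, Real.exp (-((c' * N) * Real.sin (θ k) ^ 2))) * (K / N * Real.exp (-((c' * N) * Real.sin φ ^ 2))) := by
    intro θ φ
    rw [mul_left_comm (∏ k, _), ← Real.exp_sum, ← Real.exp_add]
    congr 2
    unfold Sn
    rw [Finset.sum_neg_distrib, ← Finset.mul_sum]
    ring
  have hcE : Continuous (Function.uncurry fun (θ : Fin e → ℝ) (φ : ℝ) =>
      m * Real.exp (-(∑ k, σ k * θ k ^ 2 / 2 + σ' * φ ^ 2 / 2)) ^ (n + 2)) := by
    unfold Function.uncurry; fun_prop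
  have hcS : Continuous (Function.uncurry fun (θ : Fin e → ℝ) (φ : ℝ) =>
      K / N * Real.exp (-c' * (N * Sn θ φ))) := by
    unfold Function.uncurry Sn; fun_prop
  have herr : |(∫ θ, ∫ φ, F n θ φ ∂mu1 ∂(mue e)) -
      m * ∫ θ, ∫ φ, Real.exp (-(∑ k, σ k * θ k ^ 2 / 2 + σ' * φ ^ 2 / 2)) ^ (n + 2) ∂mu1 ∂(mue e)|
      ≤ K / N * (3 * √(3 * Real.pi) / √(c' * N)) ^ (e + 1) := by
    simp_rw [← MeasureTheory.integral_const_mul]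
    rw [← MeasureTheory.integral_sub (integrable_mue _ (inner_cont _ (hFc n)))
      (integrable_mue _ (inner_cont _ hcE))]
    have hb : ∀ᵐ θ ∂(mue e), ‖(∫ φ, F n θ φ ∂mu1) -
        ∫ φ, m * Real.exp (-(∑ k, σ k * θ k ^ 2 / 2 + σ' * φ ^ 2 / 2)) ^ (n + 2) ∂mu1‖ ≤
        ∫ φ, K / N * Real.exp (-c' * (N * Sn θ φ)) ∂mu1 := by
      filter_upwards [mue_ae e] with θ hθ
      have cl : ∀ G : (Fin e → ℝ) → ℝ → ℝ, Continuous (Function.uncurry G) → Continuous (G θ) :=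
        fun G hG => hG.comp (by fun_prop : Continuous fun φ : ℝ => (θ, φ))
      rw [← MeasureTheory.integral_sub (integrable_mu1 _ (cl _ (hFc n))) (integrable_mu1 _ (cl _ hcE))]
      refine MeasureTheory.norm_integral_le_of_norm_le (integrable_mu1 _ (cl _ hcS)) ?_
      filter_upwards [mu1_ae] with φ hφ
      exact hF n θ φ ⟨fun k => abs_le.2 ⟨(hθ k).1.le, (hθ k).2⟩, abs_le.2 ⟨hφ.1.le, hφ.2⟩⟩
    have h5 := MeasureTheory.norm_integral_le_of_norm_le (integrable_mue _ (inner_cont _ hcS)) hb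
    rw [Real.norm_eq_abs] at h5
    refine h5.trans ?_
    simp_rw [hSeq]
    rw [iter_prod (fun k t => Real.exp (-((c' * N) * Real.sin t ^ 2)))
      (fun t => K / N * Real.exp (-((c' * N) * Real.sin t ^ 2))), MeasureTheory.integral_const_mul,
      Finset.prod_const, Finset.card_univ, Fintype.card_fin, mul_left_comm, ← pow_succ]
    have h0 : 0 ≤ ∫ t, Real.exp (-(c' * N * Real.sin t ^ 2)) ∂mu1 :=
      MeasureTheory.integral_nonneg fun t => (Real.exp_pos _).le
    have := sin_int (c' * N) (by positivity)
    gcongr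
  set I := ∫ θ, ∫ φ, F n θ φ ∂mu1 ∂(mue e)
  set I' := ∫ θ, ∫ φ, Real.exp (-(∑ k, σ k * θ k ^ 2 / 2 + σ' * φ ^ 2 / 2)) ^ (n + 2) ∂mu1 ∂(mue e)
  have hs : 0 < √N := Real.sqrt_pos.2 hN0
  have e1 : I * √N ^ (e + 1) - m * ((∏ k, √(2 * Real.pi / σ k)) * √(2 * Real.pi / σ')) =
      (I - m * I') * √N ^ (e + 1) + m * ((∏ k, JJ (σ k) N) * JJ σ' N -
        (∏ k, √(2 * Real.pi / σ k)) * √(2 * Real.pi / σ')) := by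
    rw [← hmain]; ring
  rw [e1]
  calc _ ≤ |I - m * I'| * √N ^ (e + 1) + |m| * |(∏ k, JJ (σ k) N) * JJ σ' N -
        (∏ k, √(2 * Real.pi / σ k)) * √(2 * Real.pi / σ')| := by
        refine (abs_add_le _ _).trans (le_of_eq ?_)
        rw [abs_mul, abs_mul, abs_of_nonneg (by positivity : 0 ≤ √N ^ (e + 1))]
    _ ≤ (K / N * (3 * √(3 * Real.pi) / √(c' * N)) ^ (e + 1)) * √N ^ (e + 1) + |m| * (K3 / N) := by
        gcongr
        exact h3 N hN1
    _ = _ := by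
        rw [mul_assoc, ← mul_pow, Real.sqrt_mul hc'.le]
        have : 3 * √(3 * Real.pi) / (√c' * √N) * √N = 3 * √(3 * Real.pi) / √c' := by
          field_simp
        rw [this]; ring

end NDrift

namespace NDrift

lemma cos_quad (a : ℝ) : |Real.cos a - (1 - a ^ 2 / 2)| ≤ a ^ 4 := by
  by_cases h : |a| ≤ 1
  · have := Real.cos_bound h
    rw [Even.pow_abs (by decide)] at this
    have h4 : 0 ≤ a ^ 4 := by positivity
    linarith
  · push Not at h
    have h2 : 1 ≤ a ^ 2 := by
      rw [← sq_abs]; nlinarith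
    have h1 := Real.one_sub_sq_div_two_le_cos (x := a)
    have h3 := Real.cos_le_one a
    rw [abs_of_nonneg (by linarith)]
    nlinarith

lemma cos_step (P X a : ℝ) (hX : 0 ≤ X) (h : |P - (1 - X / 2)| ≤ X ^ 2) :
    |P * Real.cos a - (1 - (X + a ^ 2) / 2)| ≤ (X + a ^ 2) ^ 2 := by
  have e1 : P * Real.cos a - (1 - (X + a ^ 2) / 2) = Real.cos a * (P - (1 - X / 2))
      + (Real.cos a - (1 - a ^ 2 / 2)) + (1 - Real.cos a) * (X / 2) := by ring
  have h1 : |Real.cos a * (P - (1 - X / 2))| ≤ X ^ 2 := by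
    rw [abs_mul]
    calc _ ≤ 1 * X ^ 2 := mul_le_mul (Real.abs_cos_le_one a) h (abs_nonneg _) zero_le_one
      _ = _ := one_mul _
  have h2 := cos_quad a
  have h3 : |(1 - Real.cos a) * (X / 2)| ≤ a ^ 2 * X := by
    have := Real.one_sub_sq_div_two_le_cos (x := a)
    have := Real.cos_le_one a
    rw [abs_of_nonneg (mul_nonneg (by linarith) (by linarith))]
    nlinarith [sq_nonneg a]
  rw [e1]
  have := abs_add_le (Real.cos a * (P - (1 - X / 2)) + (Real.cos a - (1 - a ^ 2 / 2))) ((1 - Real.cos a) * (X / 2))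
  have := abs_add_le (Real.cos a * (P - (1 - X / 2))) (Real.cos a - (1 - a ^ 2 / 2))
  nlinarith [mul_nonneg hX (sq_nonneg a)]

lemma cos_prod {ι : Type*} (s : Finset ι) (x : ι → ℝ) :
    |∏ k ∈ s, Real.cos (x k) - (1 - (∑ k ∈ s, x k ^ 2) / 2)| ≤ (∑ k ∈ s, x k ^ 2) ^ 2 := by
  classical
  induction s using Finset.induction_on with
  | empty => simp
  | insert a s ha ih =>
    rw [Finset.prod_insert ha, Finset.sum_insert ha, mul_comm, add_comm (x a ^ 2)]
    exact cos_step _ _ _ (Finset.sum_nonneg fun k _ => sq_nonneg _) ih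

lemma cos_prod_abs {ι : Type*} (s : Finset ι) (x : ι → ℝ) : |∏ k ∈ s, Real.cos (x k)| ≤ 1 := by
  rw [Finset.abs_prod]
  exact Finset.prod_le_one (fun k _ => abs_nonneg _) fun k _ => Real.abs_cos_le_one _

lemma cos_prod1 {ι : Type*} (s : Finset ι) (x : ι → ℝ) :
    |∏ k ∈ s, Real.cos (x k) - 1| ≤ ∑ k ∈ s, x k ^ 2 := by
  classical
  induction s using Finset.induction_on with
  | empty => simp
  | insert a s ha ih =>
    rw [Finset.prod_insert ha, Finset.sum_insert ha]
    have e1 : Real.cos (x a) * ∏ k ∈ s, Real.cos (x k) - 1 =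
      (Real.cos (x a) - 1) * ∏ k ∈ s, Real.cos (x k) + (∏ k ∈ s, Real.cos (x k) - 1) := by ring
    rw [e1]
    have h1 : |(Real.cos (x a) - 1) * ∏ k ∈ s, Real.cos (x k)| ≤ x a ^ 2 * 1 := by
      rw [abs_mul]
      refine mul_le_mul ?_ (cos_prod_abs s x) (abs_nonneg _) (sq_nonneg _)
      have := Real.one_sub_sq_div_two_le_cos (x := x a)
      have := Real.cos_le_one (x a)
      rw [abs_sub_comm, abs_of_nonneg (by linarith)]
      nlinarith [sq_nonneg (x a)]
    have := abs_add_le ((Real.cos (x a) - 1) * ∏ k ∈ s, Real.cos (x k)) (∏ k ∈ s, Real.cos (x k) - 1)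
    linarith

lemma exp_quad (u : ℝ) (hu : 0 ≤ u) : |Real.exp (-u) - (1 - u)| ≤ u ^ 2 := by
  have h1 := Real.add_one_le_exp (-u)
  rw [abs_of_nonneg (by linarith)]
  have h2 := Real.add_one_le_exp u
  have h3 : Real.exp (-u) ≤ 1 / (1 + u) := by
    rw [Real.exp_neg, inv_eq_one_div]
    exact one_div_le_one_div_of_le (by linarith) (by linarith)
  have h4 : 1 / (1 + u) ≤ 1 - u + u ^ 2 := by
    rw [div_le_iff₀ (by linarith)]
    nlinarith [pow_nonneg hu 3]
  linarith

/-- hypotheses on the weighted step set in convenient form -/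
structure Dat (e : ℕ) (S : Finset (Fin (e + 1) → ℤ)) (w : (Fin (e + 1) → ℤ) → ℝ) (ρ Q L M : ℝ) : Prop where
  hS : ∀ i ∈ S, ∀ m, i m = -1 ∨ i m = 0 ∨ i m = 1
  hw : ∀ i ∈ S, 0 ≤ w i
  hρ : 1 < ρ
  hQ : Q = tr S w 0 0
  hQ0 : 0 < Q
  hL1 : L = ρ * tr S w 1 0
  hL2 : L = tr S w (-1) 0 / ρ
  hL0 : 0 < L
  hM : M = Q + 2 * L
  hk : ∀ k : Fin e, 0 < ∑ i ∈ S, w i * ρ ^ (i (Fin.last e)) * (i k.castSucc : ℝ) ^ 2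

variable {e : ℕ} {S : Finset (Fin (e + 1) → ℤ)} {w : (Fin (e + 1) → ℤ) → ℝ} {ρ Q L M : ℝ}

lemma Dat.split (D : Dat e S w ρ Q L M) (g : (Fin (e + 1) → ℤ) → ℝ) (h : ℤ → ℝ) :
    ∑ i ∈ S, w i * ρ ^ (i (Fin.last e)) * (g i * h (i (Fin.last e))) =
      h 0 * (∑ i ∈ S, w i * (if i (Fin.last e) = 0 then 1 else 0) * g i)
      + ρ * (∑ i ∈ S, w i * (if i (Fin.last e) = 1 then 1 else 0) * g i) * h 1
      + (∑ i ∈ S, w i * (if i (Fin.last e) = -1 then 1 else 0) * g i) / ρ * h (-1) := by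
  rw [Finset.mul_sum, Finset.mul_sum, Finset.sum_mul, Finset.sum_div, Finset.sum_mul,
    ← Finset.sum_add_distrib, ← Finset.sum_add_distrib]
  refine Finset.sum_congr rfl fun i hi => ?_
  rcases D.hS i hi (Fin.last e) with h | h | h <;> rw [h] <;> simp <;> ring

/-- weight -/
noncomputable def Wt {e : ℕ} (w : (Fin (e + 1) → ℤ) → ℝ) (ρ : ℝ) (i : Fin (e + 1) → ℤ) : ℝ :=
  w i * ρ ^ (i (Fin.last e))

lemma Dat.Wt_nonneg (D : Dat e S w ρ Q L M) : ∀ i ∈ S, 0 ≤ Wt w ρ i := fun i hi =>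
  mul_nonneg (D.hw i hi) (zpow_nonneg (by linarith [D.hρ]) _)

lemma tr_zero (ε : ℤ) : tr S w ε 0 = ∑ i ∈ S, w i * (if i (Fin.last e) = ε then 1 else 0) := by
  simp [tr]

lemma Dat.sumWt (D : Dat e S w ρ Q L M) : ∑ i ∈ S, Wt w ρ i = M := by
  have := D.split (fun _ => 1) (fun _ => 1)
  simp only [mul_one] at this
  unfold Wt
  rw [this, ← tr_zero, ← tr_zero, ← tr_zero, ← D.hL1, ← D.hL2, ← D.hQ, D.hM]; ring

lemma Dat.M0 (D : Dat e S w ρ Q L M) : 0 < M := by rw [D.hM]; linarith [D.hL0, D.hQ0]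

lemma Dat.sumWt_last (D : Dat e S w ρ Q L M) : ∑ i ∈ S, Wt w ρ i * (i (Fin.last e) : ℝ) ^ 2 = 2 * L := by
  have := D.split (fun _ => 1) (fun z => (z : ℝ) ^ 2)
  simp only [mul_one, one_mul] at this
  unfold Wt
  rw [this, ← tr_zero, ← tr_zero, ← tr_zero, ← D.hL1, ← D.hL2]; norm_num; ring

lemma Dat.tr_abs (D : Dat e S w ρ Q L M) (ε : ℤ) (θ : Fin e → ℝ) : |tr S w ε θ| ≤ tr S w ε 0 := by
  rw [tr_zero]
  unfold tr
  refine (Finset.abs_sum_le_sum_abs _ _).trans (Finset.sum_le_sum fun i hi => ?_)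
  have h0 : 0 ≤ w i * (if i (Fin.last e) = ε then 1 else 0) := mul_nonneg (D.hw i hi) (by split_ifs <;> norm_num)
  rw [abs_mul, abs_of_nonneg h0]
  exact mul_le_of_le_one_right h0 (cos_prod_abs _ _)

lemma sq_int_le (z : ℤ) (hz : z = -1 ∨ z = 0 ∨ z = 1) : (z : ℝ) ^ 2 ≤ 1 := by
  rcases hz with rfl | rfl | rfl <;> norm_num

lemma Dat.tr_sub (D : Dat e S w ρ Q L M) (ε : ℤ) (θ : Fin e → ℝ) :
    |tr S w ε θ - tr S w ε 0| ≤ tr S w ε 0 * ∑ k, θ k ^ 2 := by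
  rw [tr_zero, Finset.sum_mul]
  unfold tr
  rw [← Finset.sum_sub_distrib]
  refine (Finset.abs_sum_le_sum_abs _ _).trans (Finset.sum_le_sum fun i hi => ?_)
  have h0 : 0 ≤ w i * (if i (Fin.last e) = ε then 1 else 0) := mul_nonneg (D.hw i hi) (by split_ifs <;> norm_num)
  rw [← mul_sub_one, abs_mul, abs_of_nonneg h0]
  refine mul_le_mul_of_nonneg_left ((cos_prod1 _ _).trans (Finset.sum_le_sum fun k _ => ?_)) h0
  rw [mul_pow]
  exact mul_le_of_le_one_left (sq_nonneg _) (sq_int_le _ (D.hS i hi _))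

/-- normalized symbol -/
noncomputable def ff {e : ℕ} (S : Finset (Fin (e + 1) → ℤ)) (w : (Fin (e + 1) → ℤ) → ℝ) (ρ M : ℝ)
    (θ : Fin e → ℝ) (φ : ℝ) : ℂ :=
  ((tr S w 0 θ : ℝ) + ρ * (tr S w 1 θ : ℝ) * Complex.exp (φ * Complex.I) +
    (tr S w (-1) θ : ℝ) / ρ * Complex.exp (-(φ * Complex.I))) / M

lemma ff_eq (θ : Fin e → ℝ) (φ : ℝ) : ff S w ρ M θ φ =
    (((tr S w 0 θ + (ρ * tr S w 1 θ + tr S w (-1) θ / ρ) * Real.cos φ) / M : ℝ) : ℂ) +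
     (((ρ * tr S w 1 θ - tr S w (-1) θ / ρ) * Real.sin φ / M : ℝ) : ℂ) * Complex.I := by
  unfold ff
  rw [← neg_mul, Complex.exp_mul_I, Complex.exp_mul_I, Complex.cos_neg, Complex.sin_neg]
  push_cast
  ring

lemma ff_re (θ : Fin e → ℝ) (φ : ℝ) : (ff S w ρ M θ φ).re =
    (tr S w 0 θ + (ρ * tr S w 1 θ + tr S w (-1) θ / ρ) * Real.cos φ) / M := by
  rw [ff_eq, Complex.add_re, Complex.mul_I_re, Complex.ofReal_re, Complex.ofReal_im]; ring

lemma ff_im (θ : Fin e → ℝ) (φ : ℝ) : (ff S w ρ M θ φ).im =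
    (ρ * tr S w 1 θ - tr S w (-1) θ / ρ) * Real.sin φ / M := by
  rw [ff_eq, Complex.add_im, Complex.mul_I_im, Complex.ofReal_re, Complex.ofReal_im]; ring

lemma Dat.ff_re' (D : Dat e S w ρ Q L M) (θ : Fin e → ℝ) (φ : ℝ) : (ff S w ρ M θ φ).re * M =
    ∑ i ∈ S, Wt w ρ i * ((∏ k : Fin e, Real.cos (i k.castSucc * θ k)) * Real.cos (i (Fin.last e) * φ)) := by
  rw [ff_re, div_mul_cancel₀ _ D.M0.ne']
  have := D.split (fun i => ∏ k : Fin e, Real.cos (i k.castSucc * θ k)) (fun z => Real.cos (z * φ))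
  unfold Wt
  rw [this]
  unfold tr
  simp
  ring

/-- variances -/
noncomputable def sg {e : ℕ} (S : Finset (Fin (e + 1) → ℤ)) (w : (Fin (e + 1) → ℤ) → ℝ) (ρ M : ℝ) (k : Fin e) : ℝ :=
  (∑ i ∈ S, w i * ρ ^ (i (Fin.last e)) * (i k.castSucc : ℝ) ^ 2) / M

lemma Dat.sg_pos (D : Dat e S w ρ Q L M) (k : Fin e) : 0 < sg S w ρ M k := div_pos (D.hk k) D.M0

lemma Dat.sg_le (D : Dat e S w ρ Q L M) (k : Fin e) : sg S w ρ M k ≤ 1 := by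
  unfold sg
  rw [div_le_one D.M0, ← D.sumWt]
  exact Finset.sum_le_sum fun i hi => mul_le_of_le_one_right (D.Wt_nonneg i hi) (sq_int_le _ (D.hS i hi _))

lemma Dat.sgl_le (D : Dat e S w ρ Q L M) : 2 * L / M ≤ 1 := by
  rw [div_le_one D.M0, D.hM]; linarith [D.hQ0]

/-- Gaussian comparison -/
noncomputable def EE {e : ℕ} (S : Finset (Fin (e + 1) → ℤ)) (w : (Fin (e + 1) → ℤ) → ℝ) (ρ L M : ℝ)
    (θ : Fin e → ℝ) (φ : ℝ) : ℝ :=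
  Real.exp (-(∑ k, sg S w ρ M k * θ k ^ 2 / 2 + 2 * L / M * φ ^ 2 / 2))

lemma Dat.hre (D : Dat e S w ρ Q L M) (θ : Fin e → ℝ) (φ : ℝ) :
    |(ff S w ρ M θ φ).re - EE S w ρ L M θ φ| ≤ 2 * TT θ φ ^ 2 := by
  have hM := D.M0
  set u := ∑ k, sg S w ρ M k * θ k ^ 2 / 2 + 2 * L / M * φ ^ 2 / 2 with hu
  have hu0 : 0 ≤ u := by
    have := D.hL0
    have := fun k => (D.sg_pos k).le
    have : 0 ≤ ∑ k, sg S w ρ M k * θ k ^ 2 / 2 :=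
      Finset.sum_nonneg fun k _ => div_nonneg (mul_nonneg (this k) (sq_nonneg _)) (by norm_num)
    positivity
  have huT : u ≤ TT θ φ := by
    unfold TT
    refine add_le_add (Finset.sum_le_sum fun k _ => ?_) ?_
    · have := D.sg_le k
      nlinarith [sq_nonneg (θ k)]
    · have := D.sgl_le
      nlinarith [sq_nonneg φ]
  have h1 : |EE S w ρ L M θ φ - (1 - u)| ≤ TT θ φ ^ 2 := by
    refine (exp_quad u hu0).trans ?_
    gcongr
  have h2 : |(ff S w ρ M θ φ).re - (1 - u)| ≤ TT θ φ ^ 2 := by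
    set X : (Fin (e + 1) → ℤ) → ℝ := fun i => ∑ k : Fin e, ((i k.castSucc : ℝ) * θ k) ^ 2 + ((i (Fin.last e) : ℝ) * φ) ^ 2 with hX
    have hX0 : ∀ i, 0 ≤ X i := fun i => by simp only [hX]; positivity
    have hXT : ∀ i ∈ S, X i ≤ TT θ φ := by
      intro i hi
      unfold TT
      refine add_le_add (Finset.sum_le_sum fun k _ => ?_) ?_
      · rw [mul_pow]; exact mul_le_of_le_one_left (sq_nonneg _) (sq_int_le _ (D.hS i hi _))
      · rw [mul_pow]; exact mul_le_of_le_one_left (sq_nonneg _) (sq_int_le _ (D.hS i hi _))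
    have e1 : (1 - u) * M = ∑ i ∈ S, Wt w ρ i * (1 - X i / 2) := by
      have e2 : ∑ i ∈ S, Wt w ρ i * X i = 2 * u * M := by
        simp only [hX, mul_add, Finset.sum_add_distrib, Finset.mul_sum]
        rw [Finset.sum_comm, hu, mul_add, add_mul, Finset.mul_sum, Finset.sum_mul]
        congr 1
        · refine Finset.sum_congr rfl fun k _ => ?_
          unfold sg Wt
          have : ∀ i ∈ S, w i * ρ ^ (i (Fin.last e)) * ((i k.castSucc : ℝ) * θ k) ^ 2 =
             (w i * ρ ^ (i (Fin.last e)) * (i k.castSucc : ℝ) ^ 2) * θ k ^ 2 := fun i _ => by ring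
          rw [Finset.sum_congr rfl this, ← Finset.sum_mul]
          field_simp
        · have : ∀ i ∈ S, Wt w ρ i * ((i (Fin.last e) : ℝ) * φ) ^ 2 =
             (Wt w ρ i * (i (Fin.last e) : ℝ) ^ 2) * φ ^ 2 := fun i _ => by ring
          rw [Finset.sum_congr rfl this, ← Finset.sum_mul, D.sumWt_last]
          field_simp
      have e3 : ∀ i ∈ S, Wt w ρ i * (1 - X i / 2) = Wt w ρ i - Wt w ρ i * X i / 2 := fun i _ => by ring
      rw [Finset.sum_congr rfl e3, Finset.sum_sub_distrib, ← Finset.sum_div, e2, D.sumWt]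
      ring
    have e4 : |(ff S w ρ M θ φ).re - (1 - u)| * M ≤ TT θ φ ^ 2 * M := by
      rw [← abs_of_pos hM, ← abs_mul, abs_of_pos hM, sub_mul, e1, D.ff_re', ← Finset.sum_sub_distrib,
        ← D.sumWt, Finset.mul_sum]
      refine (Finset.abs_sum_le_sum_abs _ _).trans (Finset.sum_le_sum fun i hi => ?_)
      rw [← mul_sub, abs_mul, abs_of_nonneg (D.Wt_nonneg i hi), mul_comm]
      refine mul_le_mul_of_nonneg_right ?_ (D.Wt_nonneg i hi)
      have h5 := cos_step _ _ ((i (Fin.last e) : ℝ) * φ) (Finset.sum_nonneg fun k _ => sq_nonneg _)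
        (cos_prod Finset.univ (fun k : Fin e => (i k.castSucc : ℝ) * θ k))
      refine h5.trans ?_
      have := hXT i hi
      have := hX0 i
      gcongr
    exact le_of_mul_le_mul_right e4 hM
  have := abs_sub_le (ff S w ρ M θ φ).re (1 - u) (EE S w ρ L M θ φ)
  rw [abs_sub_comm (1 - u)] at this
  linarith

lemma Dat.him (D : Dat e S w ρ Q L M) (θ : Fin e → ℝ) (φ : ℝ) :
    |(ff S w ρ M θ φ).im| ≤ 1 * (TT θ φ * √(TT θ φ)) := by
  have hM := D.M0
  have hρ : 0 < ρ := by linarith [D.hρ]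
  rw [ff_im, abs_div, abs_of_pos hM, abs_mul, div_le_iff₀ hM]
  have hs : |Real.sin φ| ≤ √(TT θ φ) := by
    refine Real.abs_sin_le_abs.trans (Real.abs_le_sqrt ?_)
    unfold TT
    have : 0 ≤ ∑ k, θ k ^ 2 := by positivity
    linarith
  have h1 : |ρ * tr S w 1 θ - tr S w (-1) θ / ρ| ≤ 2 * L * TT θ φ := by
    have e1 : ρ * tr S w 1 θ - tr S w (-1) θ / ρ = ρ * (tr S w 1 θ - tr S w 1 0) - (tr S w (-1) θ - tr S w (-1) 0) / ρ := by
      have := D.hL1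
      rw [D.hL2] at this
      rw [mul_sub, sub_div, this]; ring
    rw [e1]
    have h3 := D.tr_sub 1 θ
    have h4 := D.tr_sub (-1) θ
    have hT : ∑ k, θ k ^ 2 ≤ TT θ φ := by unfold TT; nlinarith [sq_nonneg φ]
    calc _ ≤ |ρ * (tr S w 1 θ - tr S w 1 0)| + |(tr S w (-1) θ - tr S w (-1) 0) / ρ| := abs_sub _ _
      _ = ρ * |tr S w 1 θ - tr S w 1 0| + |tr S w (-1) θ - tr S w (-1) 0| / ρ := by
          rw [abs_mul, abs_div, abs_of_pos hρ]
      _ ≤ ρ * (tr S w 1 0 * ∑ k, θ k ^ 2) + (tr S w (-1) 0 * ∑ k, θ k ^ 2) / ρ := by gcongr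
      _ = (ρ * tr S w 1 0) * ∑ k, θ k ^ 2 + (tr S w (-1) 0 / ρ) * ∑ k, θ k ^ 2 := by ring
      _ = 2 * L * ∑ k, θ k ^ 2 := by rw [← D.hL1, ← D.hL2]; ring
      _ ≤ _ := by have := D.hL0; gcongr
  have hL := D.hL0
  have hT0 := TT_nonneg θ φ
  calc _ ≤ (2 * L * TT θ φ) * √(TT θ φ) := by gcongr
    _ ≤ (M * TT θ φ) * √(TT θ φ) := by
        gcongr
        rw [D.hM]; linarith [D.hQ0]
    _ = _ := by ring

lemma Dat.norm_le_sum (D : Dat e S w ρ Q L M) (θ : Fin e → ℝ) (φ : ℝ) :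
    ‖ff S w ρ M θ φ‖ * M ≤ |tr S w 0 θ| + ρ * |tr S w 1 θ| + |tr S w (-1) θ| / ρ := by
  have hM := D.M0
  have hρ : 0 < ρ := by linarith [D.hρ]
  unfold ff
  rw [norm_div, Complex.norm_real, Real.norm_of_nonneg hM.le, div_mul_cancel₀ _ hM.ne']
  refine (norm_add₃_le).trans (le_of_eq ?_)
  rw [← neg_mul, ← Complex.ofReal_neg]
  simp only [norm_mul, norm_div, Complex.norm_real, Complex.norm_exp_ofReal_mul_I, Real.norm_eq_abs, abs_of_pos hρ, mul_one]

lemma Dat.abs_sum_le (D : Dat e S w ρ Q L M) (θ : Fin e → ℝ) (j : Fin e) :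
    |tr S w 0 θ| + ρ * |tr S w 1 θ| + |tr S w (-1) θ| / ρ ≤ M * (1 - sg S w ρ M j * Real.sin (θ j) ^ 2 / 2) := by
  have hM := D.M0
  have hρ : 0 < ρ := by linarith [D.hρ]
  have h1 : ∀ ε, |tr S w ε θ| ≤ ∑ i ∈ S, w i * (if i (Fin.last e) = ε then 1 else 0) *
      (1 - (i j.castSucc : ℝ) ^ 2 * (Real.sin (θ j) ^ 2 / 2)) := by
    intro ε
    unfold tr
    refine (Finset.abs_sum_le_sum_abs _ _).trans (Finset.sum_le_sum fun i hi => ?_)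
    have h0 : 0 ≤ w i * (if i (Fin.last e) = ε then 1 else 0) := mul_nonneg (D.hw i hi) (by split_ifs <;> norm_num)
    rw [abs_mul, abs_of_nonneg h0]
    refine mul_le_mul_of_nonneg_left ?_ h0
    rw [Finset.abs_prod]
    have h2 : ∏ k : Fin e, |Real.cos (i k.castSucc * θ k)| ≤ |Real.cos (i j.castSucc * θ j)| := by
      rw [← Finset.mul_prod_erase _ _ (Finset.mem_univ j)]
      exact mul_le_of_le_one_right (abs_nonneg _)
        (Finset.prod_le_one (fun k _ => abs_nonneg _) fun k _ => Real.abs_cos_le_one _)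
    refine h2.trans ?_
    have h3 : |Real.cos (θ j)| ≤ 1 - Real.sin (θ j) ^ 2 / 2 := by
      have := Real.sin_sq_add_cos_sq (θ j)
      rw [← sq_abs (Real.cos _)] at this
      nlinarith [sq_nonneg (1 - |Real.cos (θ j)|)]
    rcases D.hS i hi j.castSucc with h | h | h <;> rw [h] <;> simp <;> linarith
  have h2 := D.split (fun i => 1 - (i j.castSucc : ℝ) ^ 2 * (Real.sin (θ j) ^ 2 / 2)) (fun _ => 1)
  simp only [mul_one, one_mul] at h2
  have h3 : M * (1 - sg S w ρ M j * Real.sin (θ j) ^ 2 / 2) = ∑ i ∈ S, w i * ρ ^ (i (Fin.last e)) *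
      (1 - (i j.castSucc : ℝ) ^ 2 * (Real.sin (θ j) ^ 2 / 2)) := by
    simp only [mul_sub, mul_one, Finset.sum_sub_distrib]
    have : ∀ i ∈ S, w i * ρ ^ (i (Fin.last e)) * ((i j.castSucc : ℝ) ^ 2 * (Real.sin (θ j) ^ 2 / 2)) =
      w i * ρ ^ (i (Fin.last e)) * ((i j.castSucc : ℝ) ^ 2) * (Real.sin (θ j) ^ 2 / 2) := fun i _ => by ring
    rw [Finset.sum_congr rfl this, ← Finset.sum_mul]
    have := D.sumWt
    unfold Wt at this
    rw [this]
    unfold sg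
    field_simp
  rw [h3, h2]
  have := h1 0
  have := h1 1
  have := h1 (-1)
  gcongr

lemma quad_ineq (q α β Q L c s : ℝ) (hq : |q| ≤ Q) (hα : |α| ≤ L) (hβ : |β| ≤ L) (hcs : s ^ 2 + c ^ 2 = 1) :
    (q + (β + α) * c) ^ 2 + ((β - α) * s) ^ 2 ≤ (Q + 2 * L) ^ 2 - 2 * Q * L * s ^ 2 := by
  set x := |β + α| with hx
  set y := |β - α| with hy
  have hQ : 0 ≤ Q := (abs_nonneg _).trans hq
  have hL : 0 ≤ L := (abs_nonneg _).trans hα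
  have hx0 : 0 ≤ x := abs_nonneg _
  have hy0 : 0 ≤ y := abs_nonneg _
  have hxy : x + y ≤ 2 * L := by
    rw [abs_le] at hα hβ
    rcases abs_cases (β + α) with ⟨h, _⟩ | ⟨h, _⟩ <;> rcases abs_cases (β - α) with ⟨h', _⟩ | ⟨h', _⟩ <;>
      rw [hx, hy, h, h'] <;> linarith [hα.1, hα.2, hβ.1, hβ.2]
  have hc : |c| ≤ 1 - s ^ 2 / 2 := by
    rw [← sq_abs c] at hcs
    nlinarith [sq_nonneg (1 - |c|)]
  have hs1 : s ^ 2 ≤ 1 := by nlinarith [sq_nonneg c]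
  have h1 : q * ((β + α) * c) ≤ Q * (x * (1 - s ^ 2 / 2)) := by
    refine (le_abs_self _).trans ?_
    rw [abs_mul, abs_mul]
    gcongr
  have h2 : q ^ 2 ≤ Q ^ 2 := by rw [← sq_abs]; gcongr
  have h3 : (β + α) ^ 2 = x ^ 2 := (sq_abs _).symm
  have h4 : (β - α) ^ 2 ≤ (2 * L - x) ^ 2 := by
    rw [← sq_abs, ← hy]
    have : y ≤ 2 * L - x := by linarith
    gcongr
  have h5 : (β - α) ^ 2 * s ^ 2 ≤ (2 * L - x) ^ 2 * s ^ 2 := by gcongr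
  have hxL : x ≤ 2 * L := by linarith
  have hc2 : c ^ 2 = 1 - s ^ 2 := by linarith
  have e1 : (q + (β + α) * c) ^ 2 + ((β - α) * s) ^ 2 = q ^ 2 + 2 * (q * ((β + α) * c)) + x ^ 2 * (1 - s ^ 2) + (β - α) ^ 2 * s ^ 2 := by
    rw [← hc2, ← h3]; ring
  rw [e1]
  have h6 : 0 ≤ (1 - s ^ 2) * (2 * Q * (2 * L - x) + (4 * L ^ 2 - x ^ 2)) := by
    apply mul_nonneg (by linarith)
    have : 0 ≤ 4 * L ^ 2 - x ^ 2 := by nlinarith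
    have : 0 ≤ Q * (2 * L - x) := mul_nonneg hQ (by linarith)
    linarith
  have h7 : 0 ≤ s ^ 2 * (Q * (2 * L - x) + x * (4 * L - x)) := by
    apply mul_nonneg (sq_nonneg _)
    have : 0 ≤ x * (4 * L - x) := mul_nonneg hx0 (by linarith)
    have : 0 ≤ Q * (2 * L - x) := mul_nonneg hQ (by linarith)
    linarith
  nlinarith

lemma Dat.norm_sq (θ : Fin e → ℝ) (φ : ℝ) (D : Dat e S w ρ Q L M) :
    (‖ff S w ρ M θ φ‖ * M) ^ 2 = (tr S w 0 θ + (ρ * tr S w 1 θ + tr S w (-1) θ / ρ) * Real.cos φ) ^ 2 +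
      ((ρ * tr S w 1 θ - tr S w (-1) θ / ρ) * Real.sin φ) ^ 2 := by
  have hM := D.M0.ne'
  rw [mul_pow, Complex.sq_norm, Complex.normSq_apply, ff_re, ff_im]
  field_simp

lemma Dat.norm_le_phi (D : Dat e S w ρ Q L M) (θ : Fin e → ℝ) (φ : ℝ) :
    ‖ff S w ρ M θ φ‖ ≤ 1 - (Q * L / M ^ 2) * Real.sin φ ^ 2 := by
  have hM := D.M0
  have hρ : 0 < ρ := by linarith [D.hρ]
  have h1 := quad_ineq (tr S w 0 θ) (tr S w (-1) θ / ρ) (ρ * tr S w 1 θ) Q L (Real.cos φ) (Real.sin φ)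
    (by rw [D.hQ]; exact D.tr_abs _ _)
    (by rw [D.hL2, abs_div, abs_of_pos hρ]; gcongr; exact D.tr_abs _ _)
    (by rw [D.hL1, abs_mul, abs_of_pos hρ]; gcongr; exact D.tr_abs _ _)
    (Real.sin_sq_add_cos_sq φ)
  rw [← D.norm_sq, ← D.hM] at h1
  set κ := Q * L / M ^ 2 with hκ
  have hκ1 : Q * L = κ * M ^ 2 := by rw [hκ]; field_simp
  have hκle : κ ≤ 1 := by
    rw [hκ, div_le_one (by positivity), D.hM]
    nlinarith [D.hQ0, D.hL0, mul_pos D.hQ0 D.hL0]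
  have hs1 : Real.sin φ ^ 2 ≤ 1 := Real.sin_sq_le_one φ
  have hs0 : 0 ≤ Real.sin φ ^ 2 := sq_nonneg _
  have hκ0 : 0 ≤ κ := by have := D.hQ0; have := D.hL0; positivity
  have h2 : ‖ff S w ρ M θ φ‖ ^ 2 ≤ 1 - 2 * κ * Real.sin φ ^ 2 := by
    have : ‖ff S w ρ M θ φ‖ ^ 2 * M ^ 2 ≤ (1 - 2 * κ * Real.sin φ ^ 2) * M ^ 2 := by
      nlinarith
    exact le_of_mul_le_mul_right this (by positivity)
  refine abs_le_of_sq_le_sq' ?_ ?_ |>.2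
  · nlinarith [sq_nonneg (κ * Real.sin φ ^ 2)]
  · nlinarith

lemma exists_lower (g : Fin e → ℝ) (hg : ∀ k, 0 < g k) (x : ℝ) (hx : 0 < x) : ∃ c, 0 < c ∧ c ≤ x ∧ ∀ k, c ≤ g k := by
  induction e with
  | zero => exact ⟨x, hx, le_rfl, fun k => k.elim0⟩
  | succ n ih =>
    obtain ⟨c, hc, hcx, h⟩ := ih (fun k => g k.succ) (fun k => hg _)
    refine ⟨min c (g 0), lt_min hc (hg 0), (min_le_left _ _).trans hcx, fun k => ?_⟩
    refine Fin.cases (min_le_right _ _) (fun k => (min_le_left _ _).trans (h k)) k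

lemma Dat.hf (D : Dat e S w ρ Q L M) : ∃ c, 0 < c ∧ ∀ θ φ, ‖ff S w ρ M θ φ‖ ≤ Real.exp (-c * Sn θ φ) := by
  have hM := D.M0
  obtain ⟨c, hc, hcx, h⟩ := exists_lower (fun k => sg S w ρ M k / 2) (fun k => half_pos (D.sg_pos k)) (Q * L / M ^ 2)
    (by have := D.hQ0; have := D.hL0; positivity)
  have he : (0 : ℝ) < e + 1 := by positivity
  refine ⟨c / (e + 1), by positivity, fun θ φ => ?_⟩
  have h1 : ∀ k, ‖ff S w ρ M θ φ‖ ≤ 1 - c * Real.sin (θ k) ^ 2 := by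
    intro k
    have h2 := (D.norm_le_sum θ φ).trans (D.abs_sum_le θ k)
    rw [mul_comm] at h2
    have h3 := le_of_mul_le_mul_left h2 hM
    have := h k
    nlinarith [sq_nonneg (Real.sin (θ k))]
  have h2 : ‖ff S w ρ M θ φ‖ ≤ 1 - c * Real.sin φ ^ 2 := by
    have := D.norm_le_phi θ φ
    nlinarith [sq_nonneg (Real.sin φ)]
  have h3 : ∑ _k : Fin e, ‖ff S w ρ M θ φ‖ ≤ ∑ k, (1 - c * Real.sin (θ k) ^ 2) := Finset.sum_le_sum fun k _ => h1 k
  rw [Finset.sum_sub_distrib, ← Finset.mul_sum] at h3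
  simp only [Finset.sum_const, Finset.card_univ, Fintype.card_fin, nsmul_eq_mul, mul_one] at h3
  have h4 : ‖ff S w ρ M θ φ‖ ≤ 1 - c / (e + 1) * Sn θ φ := by
    have : (e + 1) * ‖ff S w ρ M θ φ‖ ≤ (e + 1) * (1 - c / (e + 1) * Sn θ φ) := by
      have e1 : (e + 1) * (1 - c / (e + 1) * Sn θ φ) = (e + 1) - c * Sn θ φ := by field_simp
      rw [e1]; unfold Sn; linarith
    exact le_of_mul_le_mul_left this he
  have := Real.add_one_le_exp (-(c / (e + 1)) * Sn θ φ)
  linarith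

lemma ff_cont : Continuous (Function.uncurry (ff S w ρ M)) := by
  have h0 : ∀ ε, Continuous fun p : (Fin e → ℝ) × ℝ => tr S w ε p.1 := fun ε => (tr_cont S w ε).comp continuous_fst
  have h1 := h0 0
  have h2 := h0 1
  have h3 := h0 (-1)
  unfold Function.uncurry ff
  fun_prop

lemma KK_compact (e : ℕ) : ∃ K : Set ((Fin e → ℝ) × ℝ), IsCompact K ∧ K.Nonempty ∧
    ∀ θ φ, (θ, φ) ∈ K ↔ ((∀ k, |θ k| ≤ Real.pi / 2) ∧ |φ| ≤ Real.pi ∧ Real.pi / 2 ≤ |φ|) := by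
  have hpi := Real.pi_pos
  have hmem : ∀ (θ : Fin e → ℝ) (φ : ℝ), (θ, φ) ∈ (Set.univ.pi fun _ : Fin e => Set.Icc (-(Real.pi / 2)) (Real.pi / 2)) ×ˢ
    (Set.Icc (-Real.pi) Real.pi ∩ {φ | Real.pi / 2 ≤ |φ|}) ↔ ((∀ k, |θ k| ≤ Real.pi / 2) ∧ |φ| ≤ Real.pi ∧ Real.pi / 2 ≤ |φ|) := by
    intro θ φ
    rw [Set.mem_prod, Set.mem_univ_pi]
    simp [abs_le]
  refine ⟨_, ?_, ⟨(0, Real.pi), ?_⟩, hmem⟩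
  · refine (isCompact_univ_pi fun _ => isCompact_Icc).prod (isCompact_Icc.inter_right ?_)
    exact isClosed_le continuous_const continuous_abs
  · rw [hmem, abs_of_pos hpi]
    exact ⟨fun k => by simp; linarith, le_rfl, by linarith⟩

lemma Dat.lt_one (D : Dat e S w ρ Q L M) (θ : Fin e → ℝ) (φ : ℝ) (h1 : ∀ k, |θ k| ≤ Real.pi / 2)
    (h2 : |φ| ≤ Real.pi) (h3 : Real.pi / 2 ≤ |φ|) : ‖ff S w ρ M θ φ‖ < 1 := by
  have hM := D.M0
  have hpi := Real.pi_pos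
  obtain ⟨c, hc, hf⟩ := D.hf
  by_cases hs : Sn θ φ = 0
  · have hθ : θ = 0 := by
      ext k
      have h1' : Real.sin (θ k) ^ 2 = 0 := by
        have h2 : Real.sin (θ k) ^ 2 ≤ ∑ k, Real.sin (θ k) ^ 2 :=
          Finset.single_le_sum (f := fun k => Real.sin (θ k) ^ 2) (fun k _ => sq_nonneg _) (Finset.mem_univ k)
        unfold Sn at hs
        nlinarith [sq_nonneg (Real.sin (θ k)), sq_nonneg (Real.sin φ)]
      have h3 := sin_sq_lower (θ k) (h1 k)
      rw [h1', mul_zero] at h3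
      exact pow_eq_zero_iff (two_ne_zero) |>.1 (le_antisymm h3 (sq_nonneg _))
    have hsin : Real.sin φ = 0 := by
      unfold Sn at hs
      have : 0 ≤ ∑ k, Real.sin (θ k) ^ 2 := by positivity
      have : Real.sin φ ^ 2 = 0 := by nlinarith [sq_nonneg (Real.sin φ)]
      exact pow_eq_zero_iff (two_ne_zero) |>.1 this
    have hcos : Real.cos φ ≤ 0 := by
      rw [← Real.cos_abs]
      exact Real.cos_nonpos_of_pi_div_two_le_of_le h3 (by linarith)
    have hcos1 := Real.neg_one_le_cos φ
    have h4 := D.norm_sq θ φ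
    rw [hθ, hsin, ← D.hL1, ← D.hL2, ← D.hQ, mul_zero] at h4
    have hQ := D.hQ0
    have hL := D.hL0
    have h5 : (‖ff S w ρ M 0 φ‖ * M) ^ 2 < M ^ 2 := by
      rw [h4, D.hM]
      have h6 : L * Real.cos φ ≤ 0 := mul_nonpos_of_nonneg_of_nonpos hL.le hcos
      have h7 : -L ≤ L * Real.cos φ := by nlinarith
      have h8 : (Q + (L + L) * Real.cos φ) ^ 2 < (Q + 2 * L) ^ 2 := sq_lt_sq' (by linarith) (by linarith)
      linarith
    have h6 := lt_of_pow_lt_pow_left₀ 2 hM.le h5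
    rw [hθ]
    exact lt_of_mul_lt_mul_right (by linarith) hM.le
  · have hs' : 0 < Sn θ φ := lt_of_le_of_ne (Sn_nonneg _ _) (Ne.symm hs)
    refine (hf θ φ).trans_lt ?_
    rw [Real.exp_lt_one_iff]
    nlinarith

lemma Dat.h3 (D : Dat e S w ρ Q L M) : ∃ c, 0 < c ∧ ∀ θ φ, Box θ φ → (∀ k, |θ k| ≤ Real.pi / 2) →
    Real.pi / 2 ≤ |φ| → ‖ff S w ρ M θ φ‖ ≤ Real.exp (-c) := by
  obtain ⟨K, hK, hne, hmem⟩ := KK_compact e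
  have hcont : ContinuousOn (fun p : (Fin e → ℝ) × ℝ => ‖Function.uncurry (ff S w ρ M) p‖) K :=
    Continuous.continuousOn (continuous_norm.comp ff_cont)
  obtain ⟨⟨θ, φ⟩, hp, hmax⟩ := hK.exists_isMaxOn hne hcont
  rw [hmem] at hp
  have hlt := D.lt_one θ φ hp.1 hp.2.1 hp.2.2
  refine ⟨1 - ‖ff S w ρ M θ φ‖, by linarith, fun θ' φ' hb h1 h2 => ?_⟩
  have h5 : ‖ff S w ρ M θ' φ'‖ ≤ ‖ff S w ρ M θ φ‖ := isMaxOn_iff.1 hmax (θ', φ') ((hmem θ' φ').2 ⟨h1, hb.2, h2⟩)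
  have := Real.add_one_le_exp (-(1 - ‖ff S w ρ M θ φ‖))
  linarith

lemma Dat.hE (D : Dat e S w ρ Q L M) : ∃ c, 0 < c ∧ ∀ θ φ, EE S w ρ L M θ φ ≤ Real.exp (-c * TT θ φ) := by
  have hM := D.M0
  have hL := D.hL0
  obtain ⟨c, hc, hcx, h⟩ := exists_lower (fun k => sg S w ρ M k / 2) (fun k => half_pos (D.sg_pos k)) (L / M)
    (by positivity)
  refine ⟨c, hc, fun θ φ => Real.exp_le_exp.2 ?_⟩
  unfold TT
  rw [neg_mul, neg_le_neg_iff, mul_add, Finset.mul_sum]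
  refine add_le_add (Finset.sum_le_sum fun k _ => ?_) ?_
  · have := h k
    nlinarith [sq_nonneg (θ k)]
  · have : 2 * L / M * φ ^ 2 / 2 = L / M * φ ^ 2 := by ring
    rw [this]
    gcongr

end NDrift

namespace NDrift

lemma summ_pow (r : ℝ) (hr0 : 0 < r) (hr : r < 1) (j : ℕ) :
    Summable (fun k : ℕ => ((k : ℝ) + 1) ^ j * r ^ (k + 1)) := by
  have h := summable_pow_mul_geometric_of_norm_lt_one j (r := r) (by rwa [Real.norm_of_nonneg hr0.le])
  have := (summable_nat_add_iff 1).2 h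
  simpa using this

lemma hN_re (ρ : ℝ) (N : ℕ) (φ : ℝ) : (hN ρ N φ).re =
    ∑ k ∈ range (N + 1), ((k : ℝ) + 1) * (ρ⁻¹) ^ (k + 1) * Real.cos (((k : ℝ) + 1) * φ) := by
  unfold hN
  rw [Complex.re_sum]
  refine Finset.sum_congr rfl fun k _ => ?_
  rw [Complex.re_ofReal_mul]
  have : -((k + 1 : ℕ) * (φ : ℂ) * Complex.I) = ((-(((k : ℝ) + 1) * φ) : ℝ) : ℂ) * Complex.I := by push_cast; ring
  rw [this, Complex.exp_ofReal_mul_I_re, Real.cos_neg]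

lemma hN_im (ρ : ℝ) (N : ℕ) (φ : ℝ) : (hN ρ N φ).im =
    -∑ k ∈ range (N + 1), ((k : ℝ) + 1) * (ρ⁻¹) ^ (k + 1) * Real.sin (((k : ℝ) + 1) * φ) := by
  unfold hN
  rw [Complex.im_sum, ← Finset.sum_neg_distrib]
  refine Finset.sum_congr rfl fun k _ => ?_
  rw [Complex.im_ofReal_mul]
  have : -((k + 1 : ℕ) * (φ : ℂ) * Complex.I) = ((-(((k : ℝ) + 1) * φ) : ℝ) : ℂ) * Complex.I := by push_cast; ring
  rw [this, Complex.exp_ofReal_mul_I_im, Real.sin_neg]; ring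

lemma h0_eq (r : ℝ) (hr0 : 0 < r) (hr : r < 1) : ∑' k : ℕ, ((k : ℝ) + 1) * r ^ (k + 1) = r / (1 - r) ^ 2 := by
  have hn : ‖r‖ < 1 := by rwa [Real.norm_of_nonneg hr0.le]
  rw [← tsum_coe_mul_geometric_of_norm_lt_one hn]
  have hs : Summable (fun k : ℕ => (k : ℝ) * r ^ k) := by
    simpa using summable_pow_mul_geometric_of_norm_lt_one 1 hn
  rw [hs.tsum_eq_zero_add]
  simp

lemma hN_bounds (ρ : ℝ) (hρ : 1 < ρ) : ∃ C, 0 < C ∧ (∀ n φ, ‖hN ρ n φ‖ ≤ C) ∧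
    (∀ (n : ℕ) φ, |(hN ρ (n + 2) φ).re - ρ⁻¹ / (1 - ρ⁻¹) ^ 2| ≤ C * (φ ^ 2 + 1 / ((n : ℝ) + 2))) ∧
    (∀ n φ, |(hN ρ n φ).im| ≤ C * |φ|) := by
  set r := ρ⁻¹ with hr
  have hr0 : 0 < r := by rw [hr]; positivity
  have hr1 : r < 1 := inv_lt_one_of_one_lt₀ hρ
  have s1 := summ_pow r hr0 hr1 1
  have s2 := summ_pow r hr0 hr1 2
  have s3 := summ_pow r hr0 hr1 3
  simp only [pow_one] at s1
  set H1 := ∑' k : ℕ, ((k : ℝ) + 1) * r ^ (k + 1) with hH1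
  set H2 := ∑' k : ℕ, ((k : ℝ) + 1) ^ 2 * r ^ (k + 1) with hH2
  set H3 := ∑' k : ℕ, ((k : ℝ) + 1) ^ 3 * r ^ (k + 1) with hH3
  have p1 : 0 ≤ H1 := tsum_nonneg fun k => by positivity
  have p2 : 0 ≤ H2 := tsum_nonneg fun k => by positivity
  have p3 : 0 ≤ H3 := tsum_nonneg fun k => by positivity
  refine ⟨H1 + H2 + H3 + 1, by positivity, ?_, ?_, ?_⟩
  · intro n φ
    have : ‖hN ρ n φ‖ ≤ H1 := by
      unfold hN
      refine (norm_sum_le _ _).trans ?_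
      rw [hH1]
      refine le_trans (le_of_eq ?_) (s1.sum_le_tsum (range (n + 1)) (fun k _ => by positivity))
      refine Finset.sum_congr rfl fun k _ => ?_
      have e1 : -((k + 1 : ℕ) * (φ : ℂ) * Complex.I) = ((-(((k : ℝ) + 1) * φ) : ℝ) : ℂ) * Complex.I := by push_cast; ring
      rw [norm_mul, e1, Complex.norm_exp_ofReal_mul_I, Complex.norm_real, mul_one, Real.norm_of_nonneg (by positivity)]
    linarith
  · intro n φ
    rw [← h0_eq r hr0 hr1, ← hH1, hN_re, ← hr]
    have hsplit := s1.sum_add_tsum_nat_add (n + 2 + 1)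
    have hN0 : (0 : ℝ) < (n : ℝ) + 2 := by positivity
    have htail : ∑' k : ℕ, (((k + (n + 2 + 1) : ℕ) : ℝ) + 1) * r ^ ((k + (n + 2 + 1)) + 1) ≤ H2 * (1 / ((n : ℝ) + 2)) := by
      rw [mul_one_div, le_div_iff₀ hN0, ← tsum_mul_right]
      have s2' := (summable_nat_add_iff (n + 2 + 1)).2 s2
      have s1' := (summable_nat_add_iff (n + 2 + 1)).2 s1
      calc _ ≤ ∑' k : ℕ, (((k + (n + 2 + 1) : ℕ) : ℝ) + 1) ^ 2 * r ^ ((k + (n + 2 + 1)) + 1) := by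
            refine (s1'.mul_right _).tsum_le_tsum (fun k => ?_) s2'
            have : 0 < r ^ ((k + (n + 2 + 1)) + 1) := by positivity
            rw [mul_right_comm, sq]
            refine mul_le_mul_of_nonneg_right (mul_le_mul_of_nonneg_left ?_ (by positivity)) this.le
            push_cast
            have : (0 : ℝ) ≤ k := Nat.cast_nonneg k
            linarith
        _ ≤ H2 := by
            have := s2.sum_add_tsum_nat_add (n + 2 + 1)
            have h : 0 ≤ ∑ k ∈ range (n + 2 + 1), ((k : ℝ) + 1) ^ 2 * r ^ (k + 1) := by positivity
            linarith
    have htail0 : 0 ≤ ∑' k : ℕ, (((k + (n + 2 + 1) : ℕ) : ℝ) + 1) * r ^ ((k + (n + 2 + 1)) + 1) :=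
      tsum_nonneg fun k => by positivity
    have hcos : |∑ k ∈ range (n + 2 + 1), ((k : ℝ) + 1) * r ^ (k + 1) * Real.cos (((k : ℝ) + 1) * φ) -
        ∑ k ∈ range (n + 2 + 1), ((k : ℝ) + 1) * r ^ (k + 1)| ≤ H3 * φ ^ 2 := by
      rw [← Finset.sum_sub_distrib]
      refine (Finset.abs_sum_le_sum_abs _ _).trans ?_
      calc _ ≤ ∑ k ∈ range (n + 2 + 1), (((k : ℝ) + 1) ^ 3 * r ^ (k + 1)) * φ ^ 2 := by
            refine Finset.sum_le_sum fun k _ => ?_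
            have hp : 0 ≤ ((k : ℝ) + 1) * r ^ (k + 1) := by positivity
            rw [← mul_sub_one, abs_mul, abs_of_nonneg hp]
            have h1 := Real.one_sub_sq_div_two_le_cos (x := ((k : ℝ) + 1) * φ)
            have h2 := Real.cos_le_one (((k : ℝ) + 1) * φ)
            have h3 : |Real.cos (((k : ℝ) + 1) * φ) - 1| ≤ (((k : ℝ) + 1) * φ) ^ 2 := by
              rw [abs_sub_comm, abs_of_nonneg (by linarith)]
              nlinarith [sq_nonneg (((k : ℝ) + 1) * φ)]
            refine (mul_le_mul_of_nonneg_left h3 hp).trans (le_of_eq (by ring))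
        _ ≤ _ := by
            rw [← Finset.sum_mul]
            exact mul_le_mul_of_nonneg_right (s3.sum_le_tsum _ (fun k _ => by positivity)) (sq_nonneg _)
    set A := ∑ k ∈ range (n + 2 + 1), ((k : ℝ) + 1) * r ^ (k + 1) * Real.cos (((k : ℝ) + 1) * φ)
    set B := ∑ k ∈ range (n + 2 + 1), ((k : ℝ) + 1) * r ^ (k + 1)
    set Tl := ∑' k : ℕ, (((k + (n + 2 + 1) : ℕ) : ℝ) + 1) * r ^ ((k + (n + 2 + 1)) + 1)
    have h5 : |A - H1| ≤ H3 * φ ^ 2 + H2 * (1 / ((n : ℝ) + 2)) := by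
      have : A - H1 = (A - B) - Tl := by rw [hH1, ← hsplit]; ring
      rw [this]
      have := abs_sub (A - B) Tl
      rw [abs_of_nonneg htail0] at this
      linarith
    have hi : 0 ≤ 1 / ((n : ℝ) + 2) := by positivity
    nlinarith [sq_nonneg φ, mul_nonneg p1 (sq_nonneg φ), mul_nonneg p2 (sq_nonneg φ), mul_nonneg p1 hi, mul_nonneg p3 hi]
  · intro n φ
    rw [hN_im, abs_neg, ← hr]
    have : |∑ k ∈ range (n + 1), ((k : ℝ) + 1) * r ^ (k + 1) * Real.sin (((k : ℝ) + 1) * φ)| ≤ H2 * |φ| := by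
      refine (Finset.abs_sum_le_sum_abs _ _).trans ?_
      calc _ ≤ ∑ k ∈ range (n + 1), (((k : ℝ) + 1) ^ 2 * r ^ (k + 1)) * |φ| := by
            refine Finset.sum_le_sum fun k _ => ?_
            have hp : 0 ≤ ((k : ℝ) + 1) * r ^ (k + 1) := by positivity
            rw [abs_mul, abs_of_nonneg hp]
            have h3 : |Real.sin (((k : ℝ) + 1) * φ)| ≤ ((k : ℝ) + 1) * |φ| := by
              refine Real.abs_sin_le_abs.trans (le_of_eq ?_)
              rw [abs_mul, abs_of_nonneg (by positivity)]
            refine (mul_le_mul_of_nonneg_left h3 hp).trans (le_of_eq (by ring))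
        _ ≤ _ := by
            rw [← Finset.sum_mul]
            exact mul_le_mul_of_nonneg_right (s2.sum_le_tsum _ (fun k _ => by positivity)) (abs_nonneg _)
    nlinarith [abs_nonneg φ, mul_nonneg p1 (abs_nonneg φ), mul_nonneg p3 (abs_nonneg φ)]

lemma hN_cont (ρ : ℝ) (N : ℕ) : Continuous (hN ρ N) := by
  unfold hN; fun_prop

/-- regularized inverse -/
noncomputable def gi (B x : ℝ) : ℝ := x / max (x ^ 2) (B ^ 2 / 4)

lemma gi_cont (B : ℝ) (hB : 0 < B) : Continuous (gi B) := by
  unfold gi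
  refine Continuous.div (by fun_prop) (by fun_prop) fun x => ?_
  have : 0 < max (x ^ 2) (B ^ 2 / 4) := lt_max_of_lt_right (by positivity)
  exact this.ne'

lemma gi_abs (B : ℝ) (hB : 0 < B) (x : ℝ) : |gi B x| ≤ 2 / B := by
  have hm : 0 < max (x ^ 2) (B ^ 2 / 4) := lt_max_of_lt_right (by positivity)
  unfold gi
  rw [abs_div, abs_of_pos hm, div_le_div_iff₀ hm hB]
  by_cases h : B / 2 ≤ |x|
  · have := le_max_left (x ^ 2) (B ^ 2 / 4)
    rw [← sq_abs x] at *
    nlinarith [abs_nonneg x]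
  · push Not at h
    have := le_max_right (x ^ 2) (B ^ 2 / 4)
    nlinarith [abs_nonneg x]

lemma gi_big (B : ℝ) (hB : 0 < B) (x : ℝ) (h : B / 2 ≤ |x|) : gi B x = 1 / x := by
  have h1 : B ^ 2 / 4 ≤ x ^ 2 := by rw [← sq_abs x]; nlinarith
  have hx : x ≠ 0 := by
    rintro rfl; simp at h; linarith
  unfold gi
  rw [max_eq_left h1]
  field_simp

lemma gi_sub (B : ℝ) (hB : 0 < B) (x : ℝ) : |gi B x - 1 / B| ≤ 6 / B ^ 2 * |x - B| := by
  by_cases h : B / 2 ≤ |x|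
  · have hx : x ≠ 0 := by
      rintro rfl; simp at h; linarith
    rw [gi_big B hB x h]
    have : 1 / x - 1 / B = (B - x) / (x * B) := by field_simp
    rw [this, abs_div, abs_mul, abs_of_pos hB, abs_sub_comm, div_mul_eq_mul_div, div_le_div_iff₀ (by positivity) (by positivity)]
    have : 0 ≤ |x - B| := abs_nonneg _
    have h2 : B ^ 2 ≤ 6 * (|x| * B) := by nlinarith
    calc _ ≤ |x - B| * (6 * (|x| * B)) := by gcongr
      _ = _ := by ring
  · push Not at h
    have h1 := gi_abs B hB x
    have h2 : B / 2 ≤ |x - B| := by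
      rw [abs_lt] at h
      rw [abs_sub_comm]
      refine le_trans ?_ (le_abs_self _)
      linarith
    have h3 : |gi B x - 1 / B| ≤ 3 / B := by
      have := abs_sub (gi B x) (1 / B)
      rw [abs_of_pos (by positivity : 0 < 1 / B)] at this
      have e : 3 / B = 2 / B + 1 / B := by ring
      linarith
    refine h3.trans ?_
    calc 3 / B = 6 / B ^ 2 * (B / 2) := by field_simp; norm_num
      _ ≤ _ := by gcongr

/-- one minus gi times x -/
lemma gi_one (B : ℝ) (hB : 0 < B) (x : ℝ) : |1 - gi B x * x| ≤ 1 ∧ (B / 2 ≤ |x| → 1 - gi B x * x = 0) := by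
  constructor
  · have hm : 0 < max (x ^ 2) (B ^ 2 / 4) := lt_max_of_lt_right (by positivity)
    have e : gi B x * x = x ^ 2 / max (x ^ 2) (B ^ 2 / 4) := by unfold gi; ring
    have h1 : gi B x * x ≤ 1 := by rw [e, div_le_one hm]; exact le_max_left _ _
    have h2 : 0 ≤ gi B x * x := by rw [e]; positivity
    rw [abs_le]; constructor <;> linarith
  · intro h
    have hx : x ≠ 0 := by
      rintro rfl; simp at h; linarith
    rw [gi_big B hB x h]; field_simp; ring

lemma one_cos (t : ℝ) : 0 ≤ 1 + Real.cos t ∧ 1 + Real.cos t ≤ 2 :=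
  ⟨by linarith [Real.neg_one_le_cos t], by linarith [Real.cos_le_one t]⟩

lemma pc_le {ι : Type*} (s : Finset ι) (θ : ι → ℝ) : ∏ k ∈ s, (1 + Real.cos (θ k)) ≤ 2 ^ s.card := by
  rw [← Finset.prod_const]
  exact Finset.prod_le_prod (fun k _ => (one_cos _).1) fun k _ => (one_cos _).2

lemma pc_nonneg {ι : Type*} (s : Finset ι) (θ : ι → ℝ) : 0 ≤ ∏ k ∈ s, (1 + Real.cos (θ k)) :=
  Finset.prod_nonneg fun k _ => (one_cos _).1

lemma pc_sub {ι : Type*} (s : Finset ι) (θ : ι → ℝ) :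
    |∏ k ∈ s, (1 + Real.cos (θ k)) - 2 ^ s.card| ≤ 2 ^ s.card * ∑ k ∈ s, θ k ^ 2 := by
  classical
  induction s using Finset.induction_on with
  | empty => simp
  | insert a s ha ih =>
    rw [Finset.prod_insert ha, Finset.sum_insert ha, Finset.card_insert_of_notMem ha, pow_succ]
    set P := ∏ k ∈ s, (1 + Real.cos (θ k))
    have e1 : (1 + Real.cos (θ a)) * P - 2 ^ s.card * 2 = (Real.cos (θ a) - 1) * P + 2 * (P - 2 ^ s.card) := by ring
    rw [e1]
    have hP0 : 0 ≤ P := pc_nonneg _ _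
    have hP1 : P ≤ 2 ^ s.card := pc_le _ _
    have h1 : |(Real.cos (θ a) - 1) * P| ≤ θ a ^ 2 * 2 ^ s.card := by
      rw [abs_mul, abs_of_nonneg hP0]
      refine mul_le_mul ?_ hP1 hP0 (sq_nonneg _)
      have := Real.one_sub_sq_div_two_le_cos (x := θ a)
      have := Real.cos_le_one (θ a)
      rw [abs_sub_comm, abs_of_nonneg (by linarith)]
      nlinarith [sq_nonneg (θ a)]
    have h2 := abs_add_le ((Real.cos (θ a) - 1) * P) (2 * (P - 2 ^ s.card))
    rw [abs_mul 2, abs_of_pos (by norm_num : (0 : ℝ) < 2)] at h2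
    have h3 : 0 ≤ θ a ^ 2 * 2 ^ s.card := by positivity
    nlinarith

/-- amplitude -/
noncomputable def vv {e : ℕ} (S : Finset (Fin (e + 1) → ℤ)) (w : (Fin (e + 1) → ℤ) → ℝ) (B : ℝ) (θ : Fin e → ℝ) : ℝ :=
  (∏ k, (1 + Real.cos (θ k))) * gi B (tr S w 1 θ)

variable {e : ℕ} {S : Finset (Fin (e + 1) → ℤ)} {w : (Fin (e + 1) → ℤ) → ℝ} {ρ Q L M : ℝ}

lemma Dat.B0 (D : Dat e S w ρ Q L M) : 0 < tr S w 1 0 := by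
  have h1 := D.hL0
  rw [D.hL1] at h1
  exact pos_of_mul_pos_right h1 (by linarith [D.hρ])

lemma vv_cont (B : ℝ) (hB : 0 < B) : Continuous (vv S w B) := by
  unfold vv
  have := (gi_cont B hB).comp (tr_cont S w 1)
  refine Continuous.mul (by fun_prop) this

lemma Dat.vv_bounds (D : Dat e S w ρ Q L M) (B : ℝ) (hB : B = tr S w 1 0) : ∃ C, 0 < C ∧
    (∀ θ φ, |vv S w B θ - 2 ^ e / B| ≤ C * TT θ φ) ∧
    (∀ θ k, |vv S w B θ| ≤ C * (1 + Real.cos (θ k))) ∧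
    (∀ θ, |vv S w B θ| ≤ C) := by
  have hB0 : 0 < B := by rw [hB]; exact D.B0
  refine ⟨2 ^ e * (2 / B) + 2 ^ e * (6 / B), by positivity, ?_, ?_, ?_⟩
  · intro θ φ
    have h1 := pc_sub Finset.univ θ
    rw [Finset.card_univ, Fintype.card_fin] at h1
    have h2 := gi_sub B hB0 (tr S w 1 θ)
    have h3 := gi_abs B hB0 (tr S w 1 θ)
    have h4 := D.tr_sub 1 θ
    rw [← hB] at h4
    have hT : ∑ k, θ k ^ 2 ≤ TT θ φ := by unfold TT; nlinarith [sq_nonneg φ]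
    unfold vv
    set P := ∏ k, (1 + Real.cos (θ k))
    set g := gi B (tr S w 1 θ)
    set T := ∑ k, θ k ^ 2
    have e1 : P * g - 2 ^ e / B = (P - 2 ^ e) * g + 2 ^ e * (g - 1 / B) := by ring
    rw [e1]
    calc _ ≤ |P - 2 ^ e| * |g| + 2 ^ e * |g - 1 / B| := by
          refine (abs_add_le _ _).trans (le_of_eq ?_)
          rw [abs_mul, abs_mul, abs_of_pos (by positivity : (0 : ℝ) < 2 ^ e)]
      _ ≤ (2 ^ e * T) * (2 / B) + 2 ^ e * (6 / B ^ 2 * (B * T)) := by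
          gcongr
          refine h2.trans ?_
          gcongr
      _ = (2 ^ e * (2 / B) + 2 ^ e * (6 / B)) * T := by field_simp
      _ ≤ _ := by gcongr
  · intro θ k
    have h3 := gi_abs B hB0 (tr S w 1 θ)
    unfold vv
    rw [abs_mul, abs_of_nonneg (pc_nonneg _ _), ← Finset.mul_prod_erase _ _ (Finset.mem_univ k)]
    have h4 := pc_le (Finset.univ.erase k) θ
    have h5 : (2 : ℝ) ^ (Finset.univ.erase k).card ≤ 2 ^ e := by
      apply pow_le_pow_right₀ (by norm_num)
      refine (Finset.card_erase_le).trans ?_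
      simp
    have h6 := (one_cos (θ k)).1
    have h7 := pc_nonneg (Finset.univ.erase k) θ
    calc _ ≤ (1 + Real.cos (θ k)) * 2 ^ e * (2 / B) := by
          gcongr
          exact h4.trans h5
      _ ≤ (1 + Real.cos (θ k)) * 2 ^ e * (2 / B) + 2 ^ e * (6 / B) * (1 + Real.cos (θ k)) := by
          have : 0 ≤ 2 ^ e * (6 / B) * (1 + Real.cos (θ k)) := by positivity
          linarith
      _ = _ := by ring
  · intro θ
    have h3 := gi_abs B hB0 (tr S w 1 θ)
    have h1 := pc_le Finset.univ θ
    rw [Finset.card_univ, Fintype.card_fin] at h1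
    unfold vv
    rw [abs_mul, abs_of_nonneg (pc_nonneg _ _)]
    calc _ ≤ 2 ^ e * (2 / B) := by gcongr
      _ ≤ _ := by
        have : 0 ≤ 2 ^ e * (6 / B) := by positivity
        linarith

/-- asymptotics of the main double integral -/
lemma Dat.main (D : Dat e S w ρ Q L M) (B : ℝ) (hB : B = tr S w 1 0) : ∃ C, 0 < C ∧ ∀ n : ℕ,
    |(∫ θ, ∫ φ, vv S w B θ * (hN ρ (n + 2) φ * ff S w ρ M θ φ ^ (n + 2)).re ∂mu1 ∂(mue e)) * √((n : ℝ) + 2) ^ (e + 1)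
      - (2 ^ e / B * (ρ⁻¹ / (1 - ρ⁻¹) ^ 2)) * ((∏ k, √(2 * Real.pi / sg S w ρ M k)) * √(2 * Real.pi / (2 * L / M)))|
      ≤ C / ((n : ℝ) + 2) := by
  have hB0 : 0 < B := by rw [hB]; exact D.B0
  obtain ⟨c1, hc1, hf⟩ := D.hf
  obtain ⟨c2, hc2, hE⟩ := D.hE
  obtain ⟨c3, hc3, h3⟩ := D.h3
  obtain ⟨C1, hC1, hh, hh1, hh2⟩ := hN_bounds ρ D.hρ
  obtain ⟨C2, hC2, hv, hv2, hvC⟩ := D.vv_bounds B hB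
  set c := min c1 (min c2 c3) with hc
  have hcp : 0 < c := lt_min hc1 (lt_min hc2 hc3)
  have l1 : c ≤ c1 := min_le_left _ _
  have l2 : c ≤ c2 := (min_le_right _ _).trans (min_le_left _ _)
  have l3 : c ≤ c3 := (min_le_right _ _).trans (min_le_right _ _)
  set C := C1 + C2 + 2 with hC
  have m1 : C1 ≤ C := by linarith
  have m2 : C2 ≤ C := by linarith
  have m3 : 2 ≤ C := by linarith
  obtain ⟨K, c', hK, hc', hmain⟩ := pointwise (vv S w B) (2 ^ e / B) (ρ⁻¹ / (1 - ρ⁻¹) ^ 2) c C (ff S w ρ M) (hN ρ)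
    (EE S w ρ L M) hcp (by linarith)
    (fun θ φ => (hf θ φ).trans (Real.exp_le_exp.2 (by
      have := Sn_nonneg θ φ
      nlinarith)))
    (fun θ φ => (Real.exp_pos _).le)
    (fun θ φ => (hE θ φ).trans (Real.exp_le_exp.2 (by
      have := TT_nonneg θ φ
      nlinarith)))
    (fun θ φ => (D.hre θ φ).trans (by gcongr))
    (fun θ φ => (D.him θ φ).trans (by
      have := TT_nonneg θ φ
      gcongr
      linarith))
    (fun n φ => (hh n φ).trans m1)
    (fun n φ => (hh1 n φ).trans (by gcongr))
    (fun n φ => (hh2 n φ).trans (by gcongr))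
    (fun θ φ => (hv θ φ).trans (by
      have := TT_nonneg θ φ
      gcongr))
    (fun θ k => (hv2 θ k).trans (by
      have := (one_cos (θ k)).1
      gcongr))
    (fun θ => (hvC θ).trans m2)
    (fun θ φ hb h1 h2 => (h3 θ φ hb h1 h2).trans (Real.exp_le_exp.2 (by linarith)))
  refine main_int (fun n θ φ => vv S w B θ * (hN ρ (n + 2) φ * ff S w ρ M θ φ ^ (n + 2)).re) (sg S w ρ M) (2 * L / M)
    K c' (2 ^ e / B * (ρ⁻¹ / (1 - ρ⁻¹) ^ 2)) D.sg_pos (div_pos (by linarith [D.hL0]) D.M0) hK hc' ?_ hmain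
  intro n
  have h1 : Continuous fun p : (Fin e → ℝ) × ℝ => vv S w B p.1 := (vv_cont B hB0).comp continuous_fst
  have h2 : Continuous fun p : (Fin e → ℝ) × ℝ => hN ρ (n + 2) p.2 := (hN_cont ρ _).comp continuous_snd
  have h3 : Continuous fun p : (Fin e → ℝ) × ℝ => ff S w ρ M p.1 p.2 := ff_cont
  exact h1.mul (Complex.continuous_re.comp (h2.mul (h3.pow _)))

end NDrift

namespace NDrift

variable {e : ℕ} {S : Finset (Fin (e + 1) → ℤ)} {w : (Fin (e + 1) → ℤ) → ℝ} {ρ Q L M : ℝ}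

lemma pow_exp_bound (x : ℝ) (hx0 : 0 < x) (hx : x < 1) (j : ℕ) : ∃ C, 0 < C ∧ ∀ n : ℕ, ((n : ℝ) + 1) ^ j * x ^ n ≤ C := by
  have hs := summ_pow x hx0 hx j
  have h0 : 0 ≤ ∑' k : ℕ, ((k : ℝ) + 1) ^ j * x ^ (k + 1) := tsum_nonneg fun k => by positivity
  refine ⟨(∑' k : ℕ, ((k : ℝ) + 1) ^ j * x ^ (k + 1)) / x + 1, by positivity, fun n => ?_⟩
  have h1 := hs.le_tsum n (fun k _ => by positivity)
  have h2 : ((n : ℝ) + 1) ^ j * x ^ n ≤ (∑' k : ℕ, ((k : ℝ) + 1) ^ j * x ^ (k + 1)) / x := by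
    rw [le_div_iff₀ hx0]
    refine le_trans (le_of_eq ?_) h1
    rw [pow_succ]; ring
  linarith

lemma inner_eq (hM : 0 < M) (hρ : 0 < ρ) (B : ℝ) (n : ℕ) (θ : Fin e → ℝ) :
    (∏ k, (1 + Real.cos (θ k))) * (gi B (tr S w 1 θ) * tr S w 1 θ *
      GG (tr S w (-1) θ) (tr S w 1 θ) (tr S w 0 θ) n 0) =
    M ^ (n + 1) / (2 * Real.pi * (n + 1)) *
      ∫ φ, vv S w B θ * (hN ρ (n + 1) φ * ff S w ρ M θ φ ^ (n + 1)).re ∂mu1 := by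
  have hpi := Real.pi_pos
  have h := GG_fourier (tr S w (-1) θ) (tr S w 1 θ) (tr S w 0 θ) ρ hρ n
  rw [← integral_mu1] at h
  have h1 : ∀ φ : ℝ, (hN ρ (n + 1) φ * ((tr S w 0 θ : ℝ) + ρ * (tr S w 1 θ : ℝ) * Complex.exp (φ * Complex.I)
      + (tr S w (-1) θ : ℝ) / ρ * Complex.exp (-(φ * Complex.I))) ^ (n + 1)).re =
      M ^ (n + 1) * (hN ρ (n + 1) φ * ff S w ρ M θ φ ^ (n + 1)).re := by
    intro φ
    have hMc : (M : ℂ) ≠ 0 := by exact_mod_cast hM.ne'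
    have e1 : ((tr S w 0 θ : ℝ) : ℂ) + ρ * (tr S w 1 θ : ℝ) * Complex.exp (φ * Complex.I)
      + (tr S w (-1) θ : ℝ) / ρ * Complex.exp (-(φ * Complex.I)) = M * ff S w ρ M θ φ := by
      unfold ff
      field_simp
    rw [e1, mul_pow, mul_left_comm, ← Complex.ofReal_pow, Complex.re_ofReal_mul]
  simp_rw [h1] at h
  rw [MeasureTheory.integral_const_mul] at h
  rw [MeasureTheory.integral_const_mul]
  unfold vv
  have hn : (0 : ℝ) < (n : ℝ) + 1 := by positivity
  have h2 : M ^ (n + 1) / (2 * Real.pi * (n + 1)) * (∫ φ, (hN ρ (n + 1) φ * ff S w ρ M θ φ ^ (n + 1)).re ∂mu1) =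
      tr S w 1 θ * GG (tr S w (-1) θ) (tr S w 1 θ) (tr S w 0 θ) n 0 := by
    rw [div_mul_eq_mul_div, ← h]
    field_simp
  calc _ = (∏ k, (1 + Real.cos (θ k))) * gi B (tr S w 1 θ) *
        (tr S w 1 θ * GG (tr S w (-1) θ) (tr S w 1 θ) (tr S w 0 θ) n 0) := by ring
    _ = _ := by rw [← h2]; ring

lemma Dat.rem (D : Dat e S w ρ Q L M) (B : ℝ) (hB : B = tr S w 1 0) (n : ℕ) (θ : Fin e → ℝ) :
    |(∏ k, (1 + Real.cos (θ k))) * ((1 - gi B (tr S w 1 θ) * tr S w 1 θ) *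
      GG (tr S w (-1) θ) (tr S w 1 θ) (tr S w 0 θ) n 0)| ≤ 2 ^ e * (M - L / 2) ^ n := by
  have hB0 : 0 < B := by rw [hB]; exact D.B0
  have hρ : 0 < ρ := by linarith [D.hρ]
  have hQ := D.hQ0
  have hL := D.hL0
  have hM := D.hM
  have hML : 0 ≤ M - L / 2 := by linarith
  have h1 := pc_le Finset.univ θ
  rw [Finset.card_univ, Fintype.card_fin] at h1
  rw [abs_mul, abs_of_nonneg (pc_nonneg _ _)]
  refine mul_le_mul h1 ?_ (abs_nonneg _) (by positivity)
  obtain ⟨g1, g2⟩ := gi_one B hB0 (tr S w 1 θ)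
  by_cases h : B / 2 ≤ |tr S w 1 θ|
  · rw [g2 h, zero_mul, abs_zero]; positivity
  · push Not at h
    rw [abs_mul]
    have h2 := GG_bound (tr S w (-1) θ) (tr S w 1 θ) (tr S w 0 θ) ρ D.hρ.le n 0
    rw [zpow_zero, one_mul] at h2
    have h3 : |tr S w 0 θ| + ρ * |tr S w 1 θ| + |tr S w (-1) θ| / ρ ≤ M - L / 2 := by
      have a1 : |tr S w 0 θ| ≤ Q := by rw [D.hQ]; exact D.tr_abs _ _
      have a2 : |tr S w (-1) θ| / ρ ≤ L := by rw [D.hL2]; gcongr; exact D.tr_abs _ _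
      have a3 : ρ * |tr S w 1 θ| ≤ L / 2 := by
        rw [D.hL1, ← hB]
        nlinarith
      linarith
    calc _ ≤ 1 * (|tr S w 0 θ| + ρ * |tr S w 1 θ| + |tr S w (-1) θ| / ρ) ^ n :=
          mul_le_mul g1 h2 (abs_nonneg _) zero_le_one
      _ ≤ _ := by rw [one_mul]; gcongr

lemma Dat.decomp (D : Dat e S w ρ Q L M) (B : ℝ) (hB : B = tr S w 1 0)
    (hsym : ∀ j : Fin e, ∀ i ∈ S,
      Function.update i j.castSucc (-(i j.castSucc)) ∈ S ∧
        w (Function.update i j.castSucc (-(i j.castSucc))) = w i) (n : ℕ) :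
    |(2 * Real.pi) ^ e * weightedWalkCount (e + 1) S w n - M ^ (n + 1) / (2 * Real.pi * (n + 1)) *
      ∫ θ, ∫ φ, vv S w B θ * (hN ρ (n + 1) φ * ff S w ρ M θ φ ^ (n + 1)).re ∂mu1 ∂(mue e)| ≤
      2 ^ e * (M - L / 2) ^ n * (mue e).real Set.univ := by
  have hB0 : 0 < B := by rw [hB]; exact D.B0
  have hρ : 0 < ρ := by linarith [D.hρ]
  rw [walk_formula S w D.hS hsym n, ← MeasureTheory.integral_const_mul]
  simp_rw [← inner_eq D.M0 hρ B n]
  have cG : Continuous fun θ => GG (tr S w (-1) θ) (tr S w 1 θ) (tr S w 0 θ) n 0 :=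
    GG_cont (tr_cont _ _ _) (tr_cont _ _ _) (tr_cont _ _ _) n 0
  have cg : Continuous fun θ => gi B (tr S w 1 θ) := (gi_cont B hB0).comp (tr_cont S w 1)
  have ct := tr_cont S w 1
  rw [← MeasureTheory.integral_sub (integrable_mue _ (by fun_prop)) (integrable_mue _ (by fun_prop)), ← Real.norm_eq_abs]
  refine MeasureTheory.norm_integral_le_of_norm_le_const (Filter.Eventually.of_forall fun θ => ?_)
  rw [Real.norm_eq_abs]
  refine le_trans (le_of_eq ?_) (D.rem B hB n θ)
  congr 1
  ring

lemma Dat.asym (D : Dat e S w ρ Q L M) (B : ℝ) (hB : B = tr S w 1 0)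
    (hsym : ∀ j : Fin e, ∀ i ∈ S,
      Function.update i j.castSucc (-(i j.castSucc)) ∈ S ∧
        w (Function.update i j.castSucc (-(i j.castSucc))) = w i) :
    ∃ C, 0 < C ∧ ∀ n : ℕ, 1 ≤ n →
      |(2 * Real.pi) ^ (e + 1) * weightedWalkCount (e + 1) S w n / M ^ n * (((n : ℝ) + 1) * √((n : ℝ) + 1) ^ (e + 1)) -
        M * ((2 ^ e / B * (ρ⁻¹ / (1 - ρ⁻¹) ^ 2)) * ((∏ k, √(2 * Real.pi / sg S w ρ M k)) * √(2 * Real.pi / (2 * L / M))))|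
      ≤ C / ((n : ℝ) + 1) := by
  obtain ⟨C1, hC1, h1⟩ := D.main B hB
  have hM := D.M0
  have hL := D.hL0
  have hpi := Real.pi_pos
  have hML : 0 < M - L / 2 := by linarith [D.hM, D.hQ0]
  obtain ⟨C2, hC2, h2⟩ := pow_exp_bound ((M - L / 2) / M) (by positivity) (by rw [div_lt_one hM]; linarith) (e + 3)
  have hmu : 0 ≤ (mue e).real Set.univ := MeasureTheory.measureReal_nonneg
  refine ⟨M * C1 + 2 * Real.pi * (2 ^ e * (mue e).real Set.univ) * C2, by positivity, ?_⟩
  intro n hn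
  obtain ⟨m, rfl⟩ := Nat.exists_eq_add_of_le' hn
  have h3 := h1 m
  have h4 := D.decomp B hB hsym (m + 1)
  have ecast : ((m + 1 : ℕ) : ℝ) + 1 = (m : ℝ) + 2 := by push_cast; ring
  have h5 := h2 (m + 1)
  rw [ecast] at h4 h5 ⊢
  rw [show m + 1 + 1 = m + 2 from rfl] at h4
  set I := ∫ θ, ∫ φ, vv S w B θ * (hN ρ (m + 2) φ * ff S w ρ M θ φ ^ (m + 2)).re ∂mu1 ∂(mue e)
  set s := weightedWalkCount (e + 1) S w (m + 1)
  set N : ℝ := (m : ℝ) + 2 with hN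
  have hN1 : 1 ≤ N := by rw [hN]; linarith [(Nat.cast_nonneg m : (0 : ℝ) ≤ m)]
  have hN0 : 0 < N := by linarith
  set q := √N ^ (e + 1) with hq
  have hq0 : 0 < q := by rw [hq]; positivity
  have hqN : q ≤ N ^ (e + 1) := by
    rw [hq]
    have : √N ≤ N := by rw [Real.sqrt_le_left hN0.le]; nlinarith
    gcongr
  set m0 := (2 ^ e / B * (ρ⁻¹ / (1 - ρ⁻¹) ^ 2)) * ((∏ k, √(2 * Real.pi / sg S w ρ M k)) * √(2 * Real.pi / (2 * L / M)))
  set R := (2 * Real.pi) ^ e * s - M ^ (m + 2) / (2 * Real.pi * N) * I with hR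
  have e1 : (2 * Real.pi) ^ (e + 1) * s / M ^ (m + 1) * (N * q) - M * m0 =
      M * (I * q - m0) + 2 * Real.pi * (N * q * (R / M ^ (m + 1))) := by
    rw [hR]
    field_simp
    ring
  have hRb : |R / M ^ (m + 1)| ≤ 2 ^ e * (mue e).real Set.univ * ((M - L / 2) / M) ^ (m + 1) := by
    rw [abs_div, abs_of_pos (by positivity : 0 < M ^ (m + 1)), div_pow, mul_div_assoc', div_le_div_iff_of_pos_right (by positivity)]
    refine h4.trans (le_of_eq (by ring))
  rw [e1]
  have h6 : N * q * |R / M ^ (m + 1)| ≤ (2 ^ e * (mue e).real Set.univ) * C2 / N := by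
    rw [le_div_iff₀ hN0]
    calc _ ≤ N * N ^ (e + 1) * (2 ^ e * (mue e).real Set.univ * ((M - L / 2) / M) ^ (m + 1)) * N := by gcongr
      _ = 2 ^ e * (mue e).real Set.univ * (N ^ (e + 3) * ((M - L / 2) / M) ^ (m + 1)) := by ring
      _ ≤ _ := by gcongr
  calc _ ≤ M * |I * q - m0| + 2 * Real.pi * (N * q * |R / M ^ (m + 1)|) := by
        refine (abs_add_le _ _).trans (le_of_eq ?_)
        rw [abs_mul, abs_mul (2 * Real.pi), abs_mul (N * q), abs_of_pos hM, abs_of_pos (by positivity : 0 < 2 * Real.pi),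
          abs_of_pos (by positivity : 0 < N * q)]
    _ ≤ M * (C1 / N) + 2 * Real.pi * ((2 ^ e * (mue e).real Set.univ) * C2 / N) := by gcongr
    _ = _ := by ring

/-- change of normalization from `n+1` to `n` -/
lemma renorm (e : ℕ) (x : ℕ → ℝ) (K C : ℝ) (hC : 0 < C)
    (h : ∀ n : ℕ, 1 ≤ n → |x n * (((n : ℝ) + 1) * √((n : ℝ) + 1) ^ (e + 1)) - K| ≤ C / ((n : ℝ) + 1)) :
    ∃ c, 0 < c ∧ ∀ n : ℕ, 1 ≤ n → |x n * (n : ℝ) ^ (((e + 1 : ℕ) : ℝ) / 2 + 1) - K| ≤ c / n := by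
  refine ⟨C + |K| * (e + 2), by positivity, fun n hn => ?_⟩
  have hn0 : (0 : ℝ) < n := by exact_mod_cast hn
  set N : ℝ := (n : ℝ) + 1 with hN
  have hN0 : 0 < N := by positivity
  set p : ℝ := ((e + 1 : ℕ) : ℝ) / 2 + 1 with hp
  have hp0 : 0 < p := by positivity
  have e1 : N * √N ^ (e + 1) = N ^ p := by
    rw [hp, Real.rpow_add hN0, Real.rpow_one, mul_comm, Real.sqrt_eq_rpow, ← Real.rpow_natCast, ← Real.rpow_mul hN0.le]
    congr 2; ring
  set y := (n / N : ℝ) ^ p with hy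
  have hb0 : 0 < n / N := by positivity
  have hb1 : n / N ≤ 1 := by rw [div_le_one hN0]; linarith
  have hy1 : y ≤ 1 := Real.rpow_le_one hb0.le hb1 hp0.le
  have hy0 : 0 ≤ y := Real.rpow_nonneg hb0.le _
  have hyl : 1 - (e + 2) / N ≤ y := by
    have h1 : (n / N : ℝ) ^ ((e + 2 : ℕ) : ℝ) ≤ y := by
      apply Real.rpow_le_rpow_of_exponent_ge hb0 hb1
      rw [hp]; push_cast
      have : (0 : ℝ) ≤ e := Nat.cast_nonneg e
      linarith
    rw [Real.rpow_natCast] at h1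
    have hnN : (n / N : ℝ) = 1 + (-(1 / N)) := by rw [hN]; field_simp; ring
    have h2 := one_add_mul_le_pow (a := -(1 / N)) (by
      have : 1 / N ≤ 1 := by rw [div_le_one hN0]; linarith
      linarith) (e + 2)
    rw [← hnN] at h2
    refine le_trans (le_of_eq ?_) (h2.trans h1)
    push_cast; ring
  have e2 : (n : ℝ) ^ p = N ^ p * y := by
    rw [hy, ← Real.mul_rpow hN0.le hb0.le]
    congr 1; field_simp
  have h3 := h n hn
  rw [e1] at h3
  have e3 : x n * (n : ℝ) ^ p - K = (x n * N ^ p - K) * y - K * (1 - y) := by rw [e2]; ring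
  rw [e3]
  have hN' : C / N ≤ C / n := by gcongr; linarith
  calc _ ≤ |x n * N ^ p - K| * y + |K| * (1 - y) := by
        refine (abs_sub _ _).trans (le_of_eq ?_)
        rw [abs_mul, abs_mul, abs_of_nonneg hy0, abs_of_nonneg (by linarith : 0 ≤ 1 - y)]
    _ ≤ C / N * 1 + |K| * ((e + 2) / N) := by
        have : 1 - y ≤ (e + 2) / N := by linarith
        gcongr
    _ = (C + |K| * (e + 2)) / N := by ring
    _ ≤ _ := by gcongr; linarith

lemma const_eq (e : ℕ) (A B L M ρ : ℝ) (b : Fin e → ℝ) (hρ : 1 < ρ) (hB : 0 < B) (hA : A = ρ ^ 2 * B) (hL : L = ρ * B)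
    (hM : 0 < M) (hb : ∀ k, 0 < b k) :
    M * ((2 ^ e / B * (ρ⁻¹ / (1 - ρ⁻¹) ^ 2)) * ((∏ k, √(2 * Real.pi / (2 * b k / M))) * √(2 * Real.pi / (2 * L / M))))
      / (2 * Real.pi) ^ (e + 1) =
    (M * ρ / (2 * Real.pi ^ (((e + 1 : ℕ) : ℝ) / 2) * A * (1 - 1 / ρ) ^ 2)) *
      √(M ^ (e + 1) / (ρ * (∏ k, b k) * B)) := by
  have hpi := Real.pi_pos
  have hρ0 : 0 < ρ := by linarith
  have hL0 : 0 < L := by rw [hL]; positivity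
  have hP : 0 < ∏ k, b k := Finset.prod_pos fun k _ => hb k
  have e1 : (∏ k, √(2 * Real.pi / (2 * b k / M))) * √(2 * Real.pi / (2 * L / M)) =
      √Real.pi ^ (e + 1) * √(M ^ (e + 1) / (ρ * (∏ k, b k) * B)) := by
    rw [← Real.sqrt_prod _ (fun k _ => by have := hb k; positivity),
      ← Real.sqrt_mul (Finset.prod_nonneg fun k _ => by have := hb k; positivity)]
    have e2 : √Real.pi ^ (e + 1) = √(Real.pi ^ (e + 1)) := by
      rw [eq_comm, Real.sqrt_eq_iff_mul_self_eq (by positivity) (by positivity), ← mul_pow, Real.mul_self_sqrt hpi.le]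
    rw [e2, ← Real.sqrt_mul (by positivity)]
    congr 1
    have e3 : ∀ k ∈ Finset.univ, 2 * Real.pi / (2 * b k / M) = (Real.pi * M) / b k := fun k _ => by
      have := (hb k).ne'
      field_simp
    rw [Finset.prod_congr rfl e3, Finset.prod_div_distrib, Finset.prod_const, Finset.card_univ, Fintype.card_fin, hL]
    field_simp; ring
  have e4 : Real.pi ^ (((e + 1 : ℕ) : ℝ) / 2) = √Real.pi ^ (e + 1) := by
    rw [Real.sqrt_eq_rpow, ← Real.rpow_natCast, ← Real.rpow_mul hpi.le]
    congr 1; ring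
  have hs : 0 < √Real.pi ^ (e + 1) := by positivity
  have e5 : (2 * Real.pi) ^ (e + 1) = 2 ^ (e + 1) * (√Real.pi ^ (e + 1) * √Real.pi ^ (e + 1)) := by
    rw [← mul_pow √Real.pi, Real.mul_self_sqrt hpi.le, mul_pow]
  have h1 : 1 - ρ⁻¹ ≠ 0 := by
    have : ρ⁻¹ < 1 := inv_lt_one_of_one_lt₀ hρ
    linarith
  rw [e1, e4, e5, hA, ← inv_eq_one_div, pow_succ 2 e]
  generalize √Real.pi ^ (e + 1) = P at *
  generalize √(M ^ (e + 1) / (ρ * (∏ k, b k) * B)) = Y at *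
  generalize (1 - ρ⁻¹) = z at *
  field_simp

lemma sym_sum (ρ : ℝ) (hS : ∀ i ∈ S, ∀ m, i m = -1 ∨ i m = 0 ∨ i m = 1)
    (hsym : ∀ j : Fin e, ∀ i ∈ S,
      Function.update i j.castSucc (-(i j.castSucc)) ∈ S ∧
        w (Function.update i j.castSucc (-(i j.castSucc))) = w i) (k : Fin e) :
    ∑ i ∈ S, w i * ρ ^ (i (Fin.last e)) * (i k.castSucc : ℝ) ^ 2 =
      2 * ∑ i ∈ S.filter (fun i => i k.castSucc = 1), w i * ρ ^ (i (Fin.last e)) := by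
  have hne : Fin.last e ≠ k.castSucc := (Fin.castSucc_lt_last k).ne'
  have h1 : ∑ i ∈ S.filter (fun i => i k.castSucc = 1), w i * ρ ^ (i (Fin.last e)) =
      ∑ i ∈ S.filter (fun i => i k.castSucc = -1), w i * ρ ^ (i (Fin.last e)) := by
    refine Finset.sum_nbij' (fun i => Function.update i k.castSucc (-(i k.castSucc)))
      (fun i => Function.update i k.castSucc (-(i k.castSucc))) ?_ ?_ ?_ ?_ ?_
    · intro i hi
      rw [Finset.mem_filter] at hi ⊢
      exact ⟨(hsym k i hi.1).1, by simp [hi.2]⟩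
    · intro i hi
      rw [Finset.mem_filter] at hi ⊢
      exact ⟨(hsym k i hi.1).1, by simp [hi.2]⟩
    · intro i hi; simp
    · intro i hi; simp
    · intro i hi
      rw [Finset.mem_filter] at hi
      rw [(hsym k i hi.1).2, Function.update_of_ne hne]
  rw [two_mul]
  nth_rewrite 2 [h1]
  rw [Finset.sum_filter, Finset.sum_filter, ← Finset.sum_add_distrib]
  refine Finset.sum_congr rfl fun i hi => ?_
  rcases hS i hi k.castSucc with h | h | h <;> rw [h] <;> simp

end NDrift

open NDrift in
theorem main_aux
    (e : ℕ)
    (S : Finset (Fin (e + 1) → ℤ)) (w : (Fin (e + 1) → ℤ) → ℝ)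
    (hSsmall : ∀ i ∈ S, (∀ m : Fin (e + 1), i m = -1 ∨ i m = 0 ∨ i m = 1) ∧ i ≠ 0)
    (hw : ∀ i ∈ S, 0 ≤ w i)
    (hsym : ∀ j : Fin e, ∀ i ∈ S,
      Function.update i j.castSucc (-(i j.castSucc)) ∈ S ∧ w (Function.update i j.castSucc (-(i j.castSucc))) = w i)
    (hfb : ∀ j : Fin (e + 1), (∃ i ∈ S, i j = 1 ∧ 0 < w i) ∧ (∃ i ∈ S, i j = -1 ∧ 0 < w i))
    (A1 B1 Q1 : ℝ)
    (hA1 : A1 = ∑ i ∈ S.filter (fun i => i (Fin.last e) = -1), w i)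
    (hB1 : B1 = ∑ i ∈ S.filter (fun i => i (Fin.last e) = 1), w i)
    (hQ1 : Q1 = ∑ i ∈ S.filter (fun i => i (Fin.last e) = 0), w i)
    (hdrift : B1 < A1)
    (hQ : ∃ i ∈ S, i (Fin.last e) = 0 ∧ 0 < w i)
    (ρ Sρ Cρ : ℝ)
    (hρ : ρ = Real.sqrt (A1 / B1))
    (hSρ : Sρ = A1 / ρ + Q1 + ρ * B1)
    (hCρ : Cρ = (Sρ * ρ / (2 * Real.pi ^ (((e + 1 : ℕ) : ℝ) / 2) * A1 * (1 - 1 / ρ) ^ 2))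
        * Real.sqrt (Sρ ^ (e + 1) /
            (ρ * (∏ k : Fin e,
                    ∑ i ∈ S.filter (fun i => i k.castSucc = 1), w i * ρ ^ (i (Fin.last e)))
              * B1))) :
    ∃ c : ℝ, 0 < c ∧ ∀ n : ℕ, 1 ≤ n →
      |weightedWalkCount (e + 1) S w n * Sρ ^ (-(n : ℤ)) * (n : ℝ) ^ (((e + 1 : ℕ) : ℝ) / 2 + 1) - Cρ|
        ≤ c / n := by
  have hS : ∀ i ∈ S, ∀ m, i m = -1 ∨ i m = 0 ∨ i m = 1 := fun i hi => (hSsmall i hi).1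
  have possum : ∀ (T : Finset (Fin (e + 1) → ℤ)) (g : (Fin (e + 1) → ℤ) → ℝ), (∀ i ∈ T, 0 ≤ g i) →
      (∃ i ∈ T, 0 < g i) → 0 < ∑ i ∈ T, g i := fun T g h1 h2 => Finset.sum_pos' h1 h2
  have hB0 : 0 < B1 := by
    rw [hB1]
    obtain ⟨i, hi, h1, h2⟩ := (hfb (Fin.last e)).1
    exact possum _ _ (fun i hi => hw i (Finset.mem_filter.1 hi).1) ⟨i, Finset.mem_filter.2 ⟨hi, h1⟩, h2⟩
  have hQ0 : 0 < Q1 := by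
    rw [hQ1]
    obtain ⟨i, hi, h1, h2⟩ := hQ
    exact possum _ _ (fun i hi => hw i (Finset.mem_filter.1 hi).1) ⟨i, Finset.mem_filter.2 ⟨hi, h1⟩, h2⟩
  have hA0 : 0 < A1 := hB0.trans hdrift
  have hρ1 : 1 < ρ := by
    rw [hρ, Real.lt_sqrt (by norm_num), one_pow, lt_div_iff₀ hB0]; linarith
  have hρ0 : 0 < ρ := by linarith
  have hA : A1 = ρ ^ 2 * B1 := by
    rw [hρ, Real.sq_sqrt (by positivity)]; field_simp
  have htr : ∀ ε, tr S w ε 0 = ∑ i ∈ S.filter (fun i => i (Fin.last e) = ε), w i := by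
    intro ε
    rw [tr_zero, Finset.sum_filter]
    exact Finset.sum_congr rfl fun i _ => by split_ifs <;> simp
  have hbk : ∀ k : Fin e, 0 < ∑ i ∈ S.filter (fun i => i k.castSucc = 1), w i * ρ ^ (i (Fin.last e)) := by
    intro k
    obtain ⟨i, hi, h1, h2⟩ := (hfb k.castSucc).1
    exact possum _ _ (fun i hi => mul_nonneg (hw i (Finset.mem_filter.1 hi).1) (zpow_nonneg hρ0.le _))
      ⟨i, Finset.mem_filter.2 ⟨hi, h1⟩, mul_pos h2 (zpow_pos hρ0 _)⟩
  have D : Dat e S w ρ Q1 (ρ * B1) Sρ :=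
    { hS := hS
      hw := hw
      hρ := hρ1
      hQ := by rw [htr, hQ1]
      hQ0 := hQ0
      hL1 := by rw [htr, hB1]
      hL2 := by rw [htr, ← hA1, hA]; field_simp
      hL0 := by positivity
      hM := by rw [hSρ, hA]; field_simp; ring
      hk := fun k => by rw [sym_sum ρ hS hsym k]; linarith [hbk k] }
  have hM := D.M0
  obtain ⟨C, hC, h⟩ := D.asym B1 (by rw [htr, hB1]) hsym
  have hsg : ∀ k, sg S w ρ Sρ k = 2 * (∑ i ∈ S.filter (fun i => i k.castSucc = 1), w i * ρ ^ (i (Fin.last e))) / Sρ := by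
    intro k
    unfold sg
    rw [sym_sum ρ hS hsym k]
  simp_rw [hsg] at h
  have hc := const_eq e A1 B1 (ρ * B1) Sρ ρ (fun k => ∑ i ∈ S.filter (fun i => i k.castSucc = 1), w i * ρ ^ (i (Fin.last e)))
    hρ1 hB0 hA rfl hM hbk
  rw [← hCρ] at hc
  have hpi := Real.pi_pos
  have hp : 0 < (2 * Real.pi) ^ (e + 1) := by positivity
  rw [div_eq_iff hp.ne'] at hc
  rw [hc] at h
  refine renorm e (fun n => weightedWalkCount (e + 1) S w n * Sρ ^ (-(n : ℤ))) Cρ (C / (2 * Real.pi) ^ (e + 1))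
    (by positivity) fun n hn => ?_
  have h1 := h n hn
  rw [div_div, mul_comm ((2 * Real.pi) ^ (e + 1)) ((n : ℝ) + 1), ← div_div, le_div_iff₀ hp, ← abs_of_pos hp, ← abs_mul]
  refine le_trans (le_of_eq ?_) h1
  congr 1
  rw [zpow_neg, zpow_natCast]
  ring

theorem negative_drift_asymptotics_Q_nonzero
    (d : ℕ) (hd : 2 ≤ d)
    (S : Finset (Fin d → ℤ)) (w : (Fin d → ℤ) → ℝ)
    -- steps lie in {-1,0,1}^d \ {0}
    (hSsmall : ∀ i ∈ S, (∀ m : Fin d, i m = -1 ∨ i m = 0 ∨ i m = 1) ∧ i ≠ 0)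
    -- nonnegative weights
    (hw : ∀ i ∈ S, 0 ≤ w i)
    -- symmetry of the weighting over each of the first d-1 axes
    (hsym : ∀ j : Fin d, (j : ℕ) < d - 1 → ∀ i ∈ S,
      Function.update i j (-(i j)) ∈ S ∧ w (Function.update i j (-(i j))) = w i)
    -- a positively weighted step forwards and backwards in each coordinate
    (hfb : ∀ j : Fin d, (∃ i ∈ S, i j = 1 ∧ 0 < w i) ∧ (∃ i ∈ S, i j = -1 ∧ 0 < w i))
    (A1 B1 Q1 : ℝ)
    (hA1 : A1 = ∑ i ∈ S.filter (fun i => i ⟨d - 1, by omega⟩ = -1), w i)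
    (hB1 : B1 = ∑ i ∈ S.filter (fun i => i ⟨d - 1, by omega⟩ = 1), w i)
    (hQ1 : Q1 = ∑ i ∈ S.filter (fun i => i ⟨d - 1, by omega⟩ = 0), w i)
    -- negative drift
    (hdrift : B1 < A1)
    -- some step with vanishing last coordinate has positive weight
    (hQ : ∃ i ∈ S, i ⟨d - 1, by omega⟩ = 0 ∧ 0 < w i)
    (ρ Sρ Cρ : ℝ)
    (hρ : ρ = Real.sqrt (A1 / B1))
    (hSρ : Sρ = A1 / ρ + Q1 + ρ * B1)
    (hCρ : Cρ = (Sρ * ρ / (2 * Real.pi ^ ((d : ℝ) / 2) * A1 * (1 - 1 / ρ) ^ 2))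
        * Real.sqrt (Sρ ^ d /
            (ρ * (∏ j ∈ Finset.univ.filter (fun j : Fin d => (j : ℕ) < d - 1),
                    ∑ i ∈ S.filter (fun i => i j = 1), w i * ρ ^ (i ⟨d - 1, by omega⟩))
              * B1))) :
    ∃ c : ℝ, 0 < c ∧ ∀ n : ℕ, 1 ≤ n →
      |weightedWalkCount d S w n * Sρ ^ (-(n : ℤ)) * (n : ℝ) ^ ((d : ℝ) / 2 + 1) - Cρ|
        ≤ c / n := by
  obtain ⟨e, rfl⟩ : ∃ e, d = e + 1 := ⟨d - 1, by omega⟩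
  refine main_aux e S w hSsmall hw (fun j i hi => hsym j.castSucc (by simp) i hi) hfb A1 B1 Q1
    hA1 hB1 hQ1 hdrift hQ ρ Sρ Cρ hρ hSρ ?_
  rw [hCρ]
  have hprod : (∏ j ∈ Finset.univ.filter (fun j : Fin (e + 1) => (j : ℕ) < e + 1 - 1),
      ∑ i ∈ S.filter (fun i => i j = 1), w i * ρ ^ (i ⟨e + 1 - 1, by omega⟩))
      = ∏ k : Fin e, ∑ i ∈ S.filter (fun i => i k.castSucc = 1), w i * ρ ^ (i (Fin.last e)) := by
    rw [Finset.prod_filter, Fin.prod_univ_castSucc]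
    simp
    rfl
  rw [hprod]
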